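/- arXiv:2010.14614 — 2 statements merged into one kernel-verified Lean document; each statement's English description precedes it below -/
import Mathlib

section
/- Let α < 0, γ < 0 and β ∈ ℝ, and let (u,v) be a regular solution of the Schrödinger–Korteweg–de Vries system with these parameters. Then for every exponent p₁ with 0 < p₁ < 2/3 and every constant K > 0, liminf_{t→∞} ∫_{{x : |x| ≤ K·t^{p₁}}} ( v(t,x)² + |u(t,x)|² ) dx = 0; in particular liminf_{t→∞} ∫_{{|x| ≤ K t^{p₁}}} v(t,x)² dx = 0 and liminf_{t→∞} ∫_{{|x| ≤ K t^{p₁}}} |u(t,x)|² dx = 0. -/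
/-!
Only the Korteweg–de Vries equation matters. It is a dispersive conservation law
`∂ₜv + ∂ₓ³v + ∂ₓN = 0` whose flux `N = v² / 2 - γ |u|²` controls both densities because `γ < 0`.
Test it against an odd function `χ` of slope `K⁻¹ t ^ (-p)` on `|x| ≤ K t ^ p` that is bent back
to zero, with slope at least `-t ^ (-q)`, at the outer scale `t ^ q`. By Cauchy–Schwarz,
`∫ v χ = O(t ^ (q / 2))`, while
`d/dt ∫ v χ = ∫ v ∂ₜχ + ∫ N ∂ₓχ + ∫ v ∂ₓ³χ ≥ K⁻¹ t ^ (-p) ∫_{|x| ≤ K t ^ p} N - o(t ^ (-p))`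
as soon as `p < q < min (4 p) (2 - 2 p)`, a nonempty range exactly for `0 < p < 2 / 3`. If the
localized flux stayed above some `δ > 0`, then `∫ v χ` would grow at least like `t ^ (1 - p)`, which
dominates `t ^ (q / 2)`: a contradiction.
-/

open MeasureTheory Filter

/-- A regular solution of the Schrödinger–Korteweg–de Vries system
    `i ∂ₜu + ∂ₓ²u = α u v + β u |u|²`,
    `∂ₜv + ∂ₓ³v + v ∂ₓv = γ ∂ₓ(|u|²)`:
    `u, v` are smooth in `(t,x)`, Schwartz in `x` for each fixed `t`, satisfy the
    equations pointwise, and have uniformly-in-time bounded `H¹ₓ` norms. -/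
def IsSKdVSolution (α β γ : ℝ) (u : ℝ → ℝ → ℂ) (v : ℝ → ℝ → ℝ) : Prop :=
  ContDiff ℝ (⊤ : ℕ∞) (fun p : ℝ × ℝ => u p.1 p.2) ∧
  ContDiff ℝ (⊤ : ℕ∞) (fun p : ℝ × ℝ => v p.1 p.2) ∧
  (∀ t : ℝ, ∃ f : SchwartzMap ℝ ℂ, ∀ x, f x = u t x) ∧
  (∀ t : ℝ, ∃ g : SchwartzMap ℝ ℝ, ∀ x, g x = v t x) ∧
  (∀ t x : ℝ,
    Complex.I * deriv (fun s => u s x) t + iteratedDeriv 2 (u t) x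
      = (α : ℂ) * u t x * (v t x : ℂ) + (β : ℂ) * u t x * (‖u t x‖ : ℂ) ^ 2) ∧
  (∀ t x : ℝ,
    deriv (fun s => v s x) t + iteratedDeriv 3 (v t) x + v t x * deriv (v t) x
      = γ * deriv (fun y => ‖u t y‖ ^ 2) x) ∧
  (∃ C : ℝ, ∀ t : ℝ,
    (∫ x : ℝ, ‖u t x‖ ^ 2) + (∫ x : ℝ, ‖deriv (u t) x‖ ^ 2) +
      (∫ x : ℝ, (v t x) ^ 2) + (∫ x : ℝ, (deriv (v t) x) ^ 2) ≤ C)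

open Function Asymptotics
open scoped Topology ContDiff

/-! ### Asymptotics at infinity -/

lemma isLittleO_rpow_rpow_of_lt {a b : ℝ} (hab : a < b) :
    (fun t : ℝ => t ^ a) =o[atTop] fun t => t ^ b := by
  have hdecay : (fun t : ℝ => t ^ (-(b - a))) =o[atTop] fun _ => (1 : ℝ) :=
    (isLittleO_one_iff ℝ).2 (tendsto_rpow_neg_atTop (sub_pos.2 hab))
  refine (hdecay.mul_isBigO (isBigO_refl (fun t : ℝ => t ^ b) atTop)).congr' ?_ ?_
  · filter_upwards [eventually_gt_atTop 0] with t ht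
    rw [← Real.rpow_add ht]
    ring_nf
  · simp

lemma logDeriv_rpow_const (p : ℝ) {t : ℝ} (ht : 0 < t) : logDeriv (fun s => s ^ p) t = p / t := by
  rw [logDeriv_apply, Real.deriv_rpow_const, Real.rpow_sub_one ht.ne']
  field_simp

lemma sqrt_mul_rpow (B q : ℝ) {t : ℝ} (ht : 0 ≤ t) : √(B * t ^ q) = √B * t ^ (q / 2) := by
  rw [Real.sqrt_mul' B (Real.rpow_nonneg ht q), Real.sqrt_eq_rpow (t ^ q), ← Real.rpow_mul ht,
    mul_one_div]

lemma not_isLittleO_of_rpow_le_deriv {F : ℝ → ℝ} {p c : ℝ} (hp : p < 1) (hc : 0 < c)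
    (hF : ∀ᶠ t in atTop, c * t ^ (-p) ≤ deriv F t) : ¬ F =o[atTop] fun t : ℝ => t ^ (1 - p) := by
  intro hFo
  have hp' : 0 < 1 - p := sub_pos.2 hp
  obtain ⟨T, hT⟩ := eventually_atTop.1 (hF.and (eventually_gt_atTop 0))
  let G : ℝ → ℝ := fun t => F t - c / (1 - p) * t ^ (1 - p)
  have hG : ∀ t ≥ T, HasDerivAt G (deriv F t - c * t ^ (-p)) t := by
    intro t ht
    obtain ⟨hderiv, hpos⟩ := hT t ht
    have hdiff : DifferentiableAt ℝ F t := differentiableAt_of_deriv_ne_zero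
      ((mul_pos hc (Real.rpow_pos_of_pos hpos _)).trans_le hderiv).ne'
    refine (hdiff.hasDerivAt.sub ((Real.hasDerivAt_rpow_const (p := 1 - p)
      (Or.inl hpos.ne')).const_mul (c / (1 - p)))).congr_deriv ?_
    rw [show 1 - p - 1 = -p by ring]
    field_simp
  have hmono : MonotoneOn G (Set.Ici T) := by
    apply monotoneOn_of_deriv_nonneg (convex_Ici T)
    · exact fun t ht => (hG t ht).continuousAt.continuousWithinAt
    · rw [interior_Ici]
      exact fun t ht => (hG t (le_of_lt ht)).differentiableAt.differentiableWithinAt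
    · rw [interior_Ici]
      intro t ht
      rw [(hG t (le_of_lt ht)).deriv]
      exact sub_nonneg.2 (hT t (le_of_lt ht)).1
  have hconst : (fun _ : ℝ => G T) =o[atTop] fun t : ℝ => t ^ (1 - p) :=
    isLittleO_const_left.2 (Or.inr (tendsto_norm_atTop_atTop.comp (tendsto_rpow_atTop hp')))
  obtain ⟨t, htT, ht0, hsmall⟩ := ((eventually_ge_atTop T).and ((eventually_gt_atTop 0).and
    ((hFo.sub hconst).bound (half_pos (div_pos hc hp'))))).exists
  have htp : 0 < t ^ (1 - p) := Real.rpow_pos_of_pos ht0 _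
  have hGt : G T ≤ F t - c / (1 - p) * t ^ (1 - p) := hmono Set.self_mem_Ici htT htT
  rw [Real.norm_of_nonneg htp.le] at hsmall
  nlinarith [le_abs_self (F t - G T), Real.norm_eq_abs (F t - G T), div_pos hc hp']

lemma liminf_eq_zero_of_le_mul {ι : Type*} {l : Filter ι} {f g : ι → ℝ} {c : ℝ} (hc : 0 < c)
    (hg : ∀ i, 0 ≤ g i) (hgf : ∀ i, g i ≤ c * f i) (hf : ∀ δ > 0, ∃ᶠ i in l, f i < δ) :
    liminf g l = 0 := by
  have hg_freq : ∀ ε > 0, ∃ᶠ i in l, g i ≤ ε := fun ε hε =>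
    (hf (ε / c) (div_pos hε hc)).mono fun i hi =>
      (hgf i).trans ((lt_div_iff₀' hc).1 hi).le
  refine le_antisymm (le_of_forall_pos_le_add fun ε hε => ?_) ?_
  · rw [zero_add]
    exact liminf_le_of_frequently_le (hg_freq ε hε) (isBoundedUnder_of ⟨0, hg⟩)
  · exact le_liminf_of_le (IsCoboundedUnder.of_frequently_le (hg_freq 1 one_pos))
      (Eventually.of_forall hg)

/-! ### Integration against compactly supported functions -/

lemma support_iteratedDeriv_subset {𝕜 F : Type*} [NontriviallyNormedField 𝕜]
    [NormedAddCommGroup F] [NormedSpace 𝕜 F] {f : 𝕜 → F} (n : ℕ) :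
    support (iteratedDeriv n f) ⊆ tsupport f := by
  rw [iteratedDeriv_eq_equiv_comp]
  exact (support_comp_subset (map_zero _) _).trans (support_iteratedFDeriv_subset n)

lemma integral_iteratedDeriv_mul_of_hasCompactSupport {n : ℕ} {f θ : ℝ → ℝ}
    (hf : ContDiff ℝ n f) (hθ : ContDiff ℝ n θ) (hc : HasCompactSupport θ) :
    ∫ x, iteratedDeriv n f x * θ x = (-1) ^ n * ∫ x, f x * iteratedDeriv n θ x := by
  induction n generalizing θ with
  | zero => simp
  | succ n ih =>
    have hθ' : ContDiff ℝ n (deriv θ) := (contDiff_succ_iff_deriv.1 hθ).2.2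
    have hF : ContDiff ℝ 1 (iteratedDeriv n f) :=
      (contDiff_nat_succ_iff_contDiff_one_iteratedDeriv.1 hf).2
    have hθ1 : ContDiff ℝ 1 θ := hθ.of_le (by simp)
    have hθd := hθ1.continuous_deriv le_rfl
    have hFd := hF.continuous_deriv le_rfl
    have hparts := integral_mul_deriv_eq_deriv_mul_of_integrable (u := iteratedDeriv n f) (v := θ)
      (fun x _ => (hF.differentiable one_ne_zero x).hasDerivAt)
      (fun x _ => (hθ1.differentiable one_ne_zero x).hasDerivAt)
      ((hF.continuous.mul hθd).integrable_of_hasCompactSupport hc.deriv.mul_left)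
      ((hFd.mul hθ1.continuous).integrable_of_hasCompactSupport hc.mul_left)
      ((hF.continuous.mul hθ1.continuous).integrable_of_hasCompactSupport hc.mul_left)
    rw [iteratedDeriv_succ, ← neg_eq_iff_eq_neg.2 hparts, ih (hf.of_le (by simp)) hθ' hc.deriv,
      iteratedDeriv_succ']
    ring

section ParametricIntegral

variable {X E : Type*} [NormedAddCommGroup X] [NormedSpace ℝ X] [NormedAddCommGroup E]
  [NormedSpace ℝ E] {g : ℝ → X → E} {t : ℝ} {S : Set X}

lemma hasDerivAt_left_of_differentiableAt_uncurry {x : X}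
    (hg : DifferentiableAt ℝ (uncurry g) (t, x)) :
    HasDerivAt (fun s => g s x) (fderiv ℝ (uncurry g) (t, x) (1, 0)) t :=
  hg.hasFDerivAt.comp_hasDerivAt (f := fun s => (s, x)) t
    ((hasDerivAt_id t).prodMk (hasDerivAt_const t x))

lemma deriv_left_eq_fderiv_uncurry {x : X} (hg : DifferentiableAt ℝ (uncurry g) (t, x)) :
    deriv (fun s => g s x) t = fderiv ℝ (uncurry g) (t, x) (1, 0) :=
  (hasDerivAt_left_of_differentiableAt_uncurry hg).deriv

lemma continuousAt_fderiv_uncurry_left {z : ℝ × X} (hg : ContDiffAt ℝ 1 (uncurry g) z) :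
    ContinuousAt (fun z => fderiv ℝ (uncurry g) z (1, 0)) z :=
  (hg.continuousAt_fderiv one_ne_zero).clm_apply continuousAt_const

lemma continuous_deriv_left_of_contDiffAt (hg : ∀ x, ContDiffAt ℝ 1 (uncurry g) (t, x)) :
    Continuous fun x => deriv (fun s => g s x) t := by
  simp only [deriv_left_eq_fderiv_uncurry ((hg _).differentiableAt one_ne_zero)]
  exact continuous_iff_continuousAt.2 fun x =>
    (continuousAt_fderiv_uncurry_left (hg x)).comp (f := fun x => (t, x)) (by fun_prop)

lemma support_deriv_left_subset {Y F : Type*} [NormedAddCommGroup F] [NormedSpace ℝ F]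
    {g : ℝ → Y → F} {S : Set Y} (hsupp : ∀ᶠ s in 𝓝 t, support (g s) ⊆ S) :
    support (fun y => deriv (fun s => g s y) t) ⊆ S := by
  refine support_subset_iff'.2 fun y hy => ?_
  have hzero : (fun s => g s y) =ᶠ[𝓝 t] fun _ => 0 :=
    hsupp.mono fun s hs => support_subset_iff'.1 hs y hy
  rw [hzero.deriv_eq, deriv_const]

lemma hasDerivAt_integral_of_contDiffAt_of_support_subset [MeasurableSpace X] [BorelSpace X]
    {μ : Measure X} [IsFiniteMeasureOnCompacts μ] (hg : ∀ x, ContDiffAt ℝ 1 (uncurry g) (t, x))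
    (hS : IsCompact S) (hsupp : ∀ᶠ s in 𝓝 t, support (g s) ⊆ S) :
    HasDerivAt (fun s => ∫ x, g s x ∂μ) (∫ x, deriv (fun s => g s x) t ∂μ) t := by
  have hdiff : ∀ x, DifferentiableAt ℝ (uncurry g) (t, x) := fun x =>
    (hg x).differentiableAt one_ne_zero
  have hcont := continuous_deriv_left_of_contDiffAt hg
  obtain ⟨B, hB⟩ := hS.exists_bound_of_continuousOn hcont.continuousOn
  have hnear : ∀ᶠ s in 𝓝 t, ∀ x ∈ S, DifferentiableAt ℝ (uncurry g) (s, x) ∧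
      ‖fderiv ℝ (uncurry g) (s, x) (1, 0)‖ < B + 1 := by
    refine hS.eventually_forall_of_forall_eventually fun x hx => ?_
    have hBx : ‖fderiv ℝ (uncurry g) (t, x) (1, 0)‖ < B + 1 :=
      (deriv_left_eq_fderiv_uncurry (hdiff x) ▸ hB x hx).trans_lt (lt_add_one B)
    filter_upwards [(hg x).eventually (by simp),
      (continuousAt_fderiv_uncurry_left (hg x)).norm.eventually_lt_const hBx] with z hz hz'
    exact ⟨hz.differentiableAt one_ne_zero, hz'⟩
  have hint : ∀ᶠ s in 𝓝 t, IntegrableOn (g s) S μ := by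
    filter_upwards [hnear] with s hs
    refine ContinuousOn.integrableOn_compact hS fun x hx => ContinuousAt.continuousWithinAt ?_
    exact (hs x hx).1.continuousAt.comp (f := fun x => (s, x)) (by fun_prop)
  have hmain := (hasDerivAt_integral_of_dominated_loc_of_deriv_le (μ := μ.restrict S) (F := g)
    (F' := fun s x => deriv (fun s => g s x) s) (bound := fun _ => B + 1) hnear
    (hint.mono fun s hs => hs.aestronglyMeasurable) hint.self_of_nhds
    (hcont.continuousOn.aestronglyMeasurable_of_isCompact hS hS.measurableSet)
    (ae_restrict_of_forall_mem hS.measurableSet fun x hx s hs =>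
      (deriv_left_eq_fderiv_uncurry (hs x hx).1 ▸ (hs x hx).2).le)
    (continuousOn_const.integrableOn_compact hS)
    (ae_restrict_of_forall_mem hS.measurableSet fun x hx s hs =>
      (hasDerivAt_left_of_differentiableAt_uncurry (hs x hx).1).differentiableAt.hasDerivAt)).2
  rw [← setIntegral_eq_integral_of_forall_compl_eq_zero
    (support_subset_iff'.1 (support_deriv_left_subset hsupp))]
  exact hmain.congr_of_eventuallyEq <| hsupp.mono fun s hs =>
    (setIntegral_eq_integral_of_forall_compl_eq_zero (support_subset_iff'.1 hs)).symm

end ParametricIntegral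

lemma abs_integral_mul_le_of_support_subset {X : Type*} [MeasurableSpace X] {μ : Measure X}
    {f θ : X → ℝ} {S : Set X} {A : ℝ} (hf : MemLp f 2 μ) (hS : MeasurableSet S) (hμS : μ S ≠ ⊤)
    (hA : 0 ≤ A) (hθ : ∀ x, |θ x| ≤ A) (hsupp : support θ ⊆ S) :
    |∫ x, f x * θ x ∂μ| ≤ A * √(μ.real S * ∫ x, f x ^ 2 ∂μ) := by
  have hA_memLp : MemLp (S.indicator fun _ => A) 2 μ := memLp_indicator_const 2 hS A (Or.inr hμS)
  have hθ_le : ∀ x, |θ x| ≤ S.indicator (fun _ => A) x := fun x => by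
    by_cases hx : x ∈ S
    · rw [Set.indicator_of_mem hx]
      exact hθ x
    · rw [Set.indicator_of_notMem hx, support_subset_iff'.1 hsupp x hx, abs_zero]
  have hcauchy := integral_mul_norm_le_Lp_mul_Lq (μ := μ) Real.HolderConjugate.two_two
    (f := f) (g := S.indicator fun _ => A) (by simpa using hf) (by simpa using hA_memLp)
  have hsq : ∫ x, S.indicator (fun _ => A) x ^ 2 ∂μ = A ^ 2 * μ.real S := by
    rw [mul_comm, ← smul_eq_mul, ← integral_indicator_const _ hS]
    congr 1 with x
    by_cases hx : x ∈ S <;> simp [hx]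
  simp only [Real.norm_eq_abs, Real.rpow_two, sq_abs, ← Real.sqrt_eq_rpow, hsq] at hcauchy
  calc |∫ x, f x * θ x ∂μ|
      ≤ ∫ x, |f x| * |S.indicator (fun _ => A) x| ∂μ := by
        refine (Real.norm_eq_abs _).symm.trans_le <| norm_integral_le_of_norm_le
          (hf.abs.integrable_mul hA_memLp.abs) (Eventually.of_forall fun x => ?_)
        rw [norm_mul]
        exact mul_le_mul_of_nonneg_left ((hθ_le x).trans (le_abs_self _)) (norm_nonneg _)
    _ ≤ √(∫ x, f x ^ 2 ∂μ) * √(A ^ 2 * μ.real S) := hcauchy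
    _ = A * √(μ.real S * ∫ x, f x ^ 2 ∂μ) := by
        rw [Real.sqrt_mul (sq_nonneg A), Real.sqrt_sq hA, Real.sqrt_mul measureReal_nonneg]
        ring

/-! ### The window function -/

/-- A smooth bump equal to `1` on `[-1, 1]` and supported in `[-2, 2]`. -/
noncomputable def plateau : ContDiffBump (0 : ℝ) := ⟨1, 2, one_pos, one_lt_two⟩

/-- The primitive of `plateau` vanishing at `0`: a smooth truncation of the identity, constant on
each side of `[-2, 2]`. -/
noncomputable def ramp (y : ℝ) : ℝ := ∫ x in (0 : ℝ)..y, plateau x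

/-- The difference of two rescaled ramps. For `0 < b < a` it behaves like `ramp (a * x)` on
`|x| ≪ 1 / b` but is compactly supported, since the two ramps cancel where both are saturated. -/
noncomputable def window (a b x : ℝ) : ℝ := ramp (a * x) - ramp (b * x)

lemma plateau_eq_one {y : ℝ} (hy : |y| ≤ 1) : plateau y = 1 :=
  plateau.one_of_mem_closedBall (by simpa [plateau] using hy)

lemma plateau_eq_zero {y : ℝ} (hy : 2 ≤ |y|) : plateau y = 0 :=
  plateau.zero_of_le_dist (by simpa [plateau] using hy)

lemma abs_mul_plateau_le (y : ℝ) : |y * plateau y| ≤ 2 := by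
  rcases le_total 2 |y| with hy | hy
  · simp [plateau_eq_zero hy]
  · rw [abs_mul, abs_of_nonneg plateau.nonneg]
    nlinarith [plateau.nonneg (x := y), plateau.le_one (x := y)]

lemma exists_abs_iteratedDeriv_plateau_le (n : ℕ) :
    ∃ M, ∀ y, |iteratedDeriv n plateau y| ≤ M :=
  (plateau.contDiff.continuous_iteratedDeriv' n).bounded_above_of_compact_support
    (plateau.hasCompactSupport.mono' (support_iteratedDeriv_subset n))

lemma hasDerivAt_ramp (y : ℝ) : HasDerivAt ramp (plateau y) y :=
  intervalIntegral.integral_hasDerivAt_right (plateau.continuous.intervalIntegrable _ _)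
    plateau.continuous.stronglyMeasurable.stronglyMeasurableAtFilter plateau.continuous.continuousAt

lemma deriv_ramp : deriv ramp = plateau :=
  funext fun y => (hasDerivAt_ramp y).deriv

lemma contDiff_ramp {n : ℕ∞} : ContDiff ℝ n ramp := by
  have hinfty : ContDiff ℝ ∞ ramp :=
    contDiff_infty_iff_deriv.2
      ⟨fun y => (hasDerivAt_ramp y).differentiableAt, deriv_ramp ▸ plateau.contDiff⟩
  exact hinfty.of_le (by exact_mod_cast le_top)

lemma ramp_sub_ramp (x y : ℝ) : ramp y - ramp x = ∫ s in x..y, plateau s :=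
  intervalIntegral.integral_interval_sub_left (plateau.continuous.intervalIntegrable _ _)
    (plateau.continuous.intervalIntegrable _ _)

lemma ramp_eq_of_two_le {x y : ℝ} (hx : 2 ≤ x) (hy : 2 ≤ y) : ramp x = ramp y := by
  rw [← sub_eq_zero, ramp_sub_ramp]
  refine intervalIntegral.integral_zero_ae (Eventually.of_forall fun s hs => plateau_eq_zero ?_)
  exact (le_min hy hx).trans (hs.1.le.trans (le_abs_self s))

lemma ramp_neg (y : ℝ) : ramp (-y) = -ramp y := by
  have hreflect := intervalIntegral.integral_comp_neg (a := 0) (b := -y) plateau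
  simp only [plateau.neg, neg_neg, neg_zero] at hreflect
  rw [ramp, hreflect, intervalIntegral.integral_symm, ramp]

lemma abs_ramp_le_abs (y : ℝ) : |ramp y| ≤ |y| := by
  have hle : ‖ramp y‖ ≤ 1 * |y - 0| := by
    refine intervalIntegral.norm_integral_le_of_norm_le_const fun x _ => ?_
    rw [Real.norm_of_nonneg plateau.nonneg]
    exact plateau.le_one
  simpa using hle

lemma abs_ramp_le_two (y : ℝ) : |ramp y| ≤ 2 := by
  wlog hy : 0 ≤ y generalizing y
  · simpa [ramp_neg] using this (-y) (by linarith)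
  have htwo : |ramp 2| ≤ 2 := by simpa using abs_ramp_le_abs 2
  rcases le_total y 2 with hy2 | hy2
  · exact (abs_ramp_le_abs y).trans (by rwa [abs_of_nonneg hy])
  · rwa [ramp_eq_of_two_le hy2 le_rfl]

lemma abs_window_le (a b x : ℝ) : |window a b x| ≤ 4 :=
  (abs_sub _ _).trans (by linarith [abs_ramp_le_two (a * x), abs_ramp_le_two (b * x)])

lemma contDiff_window (a b : ℝ) {n : ℕ∞} : ContDiff ℝ n (window a b) :=
  (contDiff_ramp.comp (contDiff_const.mul contDiff_id)).sub
    (contDiff_ramp.comp (contDiff_const.mul contDiff_id))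

lemma window_neg (a b x : ℝ) : window a b (-x) = -window a b x := by
  simp only [window, mul_neg, ramp_neg]
  ring

lemma support_window_subset {a b R : ℝ} (ha : 0 ≤ a) (hb : 0 ≤ b) (haR : 2 ≤ a * R)
    (hbR : 2 ≤ b * R) : support (window a b) ⊆ Set.Icc (-R) R := by
  have hzero : ∀ x, R < x → window a b x = 0 := fun x hx =>
    sub_eq_zero.2 <| ramp_eq_of_two_le (haR.trans (by gcongr)) (hbR.trans (by gcongr))
  intro x hx
  by_contra hxR
  rcases not_and_or.1 hxR with h | h
  · exact hx (neg_eq_zero.1 ((window_neg a b x).symm.trans (hzero (-x) (by linarith))))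
  · exact hx (hzero x (not_le.1 h))

lemma eventually_support_window_subset {a b : ℝ → ℝ} {R t : ℝ} (ha : ContinuousAt a t)
    (hb : ContinuousAt b t) (ha0 : 0 < a t) (hb0 : 0 < b t) (haR : 2 < a t * R)
    (hbR : 2 < b t * R) : ∀ᶠ s in 𝓝 t, support (window (a s) (b s)) ⊆ Set.Icc (-R) R := by
  filter_upwards [ha.eventually_const_lt ha0, hb.eventually_const_lt hb0,
    (ha.mul_const R).eventually_const_lt haR, (hb.mul_const R).eventually_const_lt hbR]
    with s ha0 hb0 haR hbR
  exact support_window_subset ha0.le hb0.le haR.le hbR.le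

lemma deriv_window (a b x : ℝ) :
    deriv (window a b) x = a * plateau (a * x) - b * plateau (b * x) := by
  have hramp : ∀ c : ℝ, HasDerivAt (fun x => ramp (c * x)) (plateau (c * x) * c) x := fun c =>
    (hasDerivAt_ramp (c * x)).comp x (hasDerivAt_const_mul c)
  refine ((hramp a).sub (hramp b)).deriv.trans ?_
  ring

lemma abs_deriv_window_le {a b : ℝ} (ha : 0 ≤ a) (hb : 0 ≤ b) (x : ℝ) :
    |deriv (window a b) x| ≤ a + b := by
  have hscaled : ∀ c : ℝ, 0 ≤ c → |c * plateau (c * x)| ≤ c := fun c hc => by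
    rw [abs_of_nonneg (mul_nonneg hc plateau.nonneg)]
    exact mul_le_of_le_one_right hc plateau.le_one
  rw [deriv_window]
  exact (abs_sub _ _).trans (add_le_add (hscaled a ha) (hscaled b hb))

lemma iteratedDeriv_three_window (a b x : ℝ) : iteratedDeriv 3 (window a b) x =
    a ^ 3 * iteratedDeriv 2 plateau (a * x) - b ^ 3 * iteratedDeriv 2 plateau (b * x) := by
  have hsmooth : ∀ c : ℝ, ContDiffAt ℝ (3 : ℕ) (fun x => ramp (c * x)) x := fun c =>
    (contDiff_ramp.comp (contDiff_const.mul contDiff_id)).contDiffAt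
  have hramp : iteratedDeriv 3 ramp = iteratedDeriv 2 plateau := by
    rw [iteratedDeriv_succ', deriv_ramp]
  refine (iteratedDeriv_fun_sub (hsmooth a) (hsmooth b)).trans ?_
  simp only [iteratedDeriv_comp_const_mul (contDiff_ramp (n := 3)), hramp]

lemma abs_iteratedDeriv_three_window_le {a b M : ℝ} (ha : 0 ≤ a) (hb : 0 ≤ b)
    (hM : ∀ y, |iteratedDeriv 2 plateau y| ≤ M) (x : ℝ) :
    |iteratedDeriv 3 (window a b) x| ≤ M * (a ^ 3 + b ^ 3) := by
  have hscaled : ∀ c : ℝ, 0 ≤ c → |c ^ 3 * iteratedDeriv 2 plateau (c * x)| ≤ c ^ 3 * M :=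
    fun c hc => by
      rw [abs_mul, abs_of_nonneg (by positivity)]
      exact mul_le_mul_of_nonneg_left (hM _) (by positivity)
  rw [iteratedDeriv_three_window]
  linarith [abs_sub (a ^ 3 * iteratedDeriv 2 plateau (a * x))
    (b ^ 3 * iteratedDeriv 2 plateau (b * x)), hscaled a ha, hscaled b hb]

lemma abs_deriv_window_scale_le {a b : ℝ → ℝ} {t : ℝ} (ha : DifferentiableAt ℝ a t)
    (hb : DifferentiableAt ℝ b t) (ha0 : a t ≠ 0) (hb0 : b t ≠ 0) (x : ℝ) :
    |deriv (fun s => window (a s) (b s) x) t| ≤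
      2 * (|logDeriv a t| + |logDeriv b t|) := by
  have hramp : ∀ c : ℝ → ℝ, DifferentiableAt ℝ c t →
      HasDerivAt (fun s => ramp (c s * x)) (plateau (c t * x) * (deriv c t * x)) t :=
    fun c hc => (hasDerivAt_ramp (c t * x)).comp (h := fun s => c s * x) t
      (hc.hasDerivAt.mul_const x)
  have hbound : ∀ c : ℝ → ℝ, c t ≠ 0 →
      |plateau (c t * x) * (deriv c t * x)| ≤ 2 * |logDeriv c t| := fun c hc => by
    have hfactor : plateau (c t * x) * (deriv c t * x) =
        c t * x * plateau (c t * x) * logDeriv c t := by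
      rw [logDeriv_apply]
      field_simp
    rw [hfactor, abs_mul]
    exact mul_le_mul_of_nonneg_right (abs_mul_plateau_le _) (abs_nonneg _)
  have hderiv : deriv (fun s => window (a s) (b s) x) t = plateau (a t * x) * (deriv a t * x) -
      plateau (b t * x) * (deriv b t * x) := ((hramp a ha).sub (hramp b hb)).deriv
  rw [hderiv]
  linarith [abs_sub (plateau (a t * x) * (deriv a t * x)) (plateau (b t * x) * (deriv b t * x)),
    hbound a ha0, hbound b hb0]

lemma eventually_two_lt_window_scale_mul {p q κ : ℝ} (hκ : 0 < κ) (hpq : p < q) :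
    ∀ᶠ t : ℝ in atTop, 2 < κ * t ^ (-p) * (3 * t ^ q) ∧ 2 < t ^ (-q) * (3 * t ^ q) := by
  filter_upwards [eventually_gt_atTop 0,
    (tendsto_rpow_atTop (sub_pos.2 hpq)).eventually_gt_atTop κ⁻¹] with t ht hlarge
  constructor
  · have hprod : κ * t ^ (-p) * (3 * t ^ q) = 3 * (κ * t ^ (q - p)) := by
      rw [sub_eq_add_neg, Real.rpow_add ht]
      ring
    have hone : 1 < κ * t ^ (q - p) := (inv_lt_iff_one_lt_mul₀' hκ).1 hlarge
    linarith
  · rw [mul_left_comm, ← Real.rpow_add ht]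
    norm_num

lemma isLittleO_window_error {p q : ℝ} (hpq : p < q) (hq_four : q < 4 * p)
    (hq_two : q < 2 - 2 * p) (κ A M C : ℝ) :
    (fun t : ℝ => t ^ (-q) * C + (A / t + M * ((κ * t ^ (-p)) ^ 3 + (t ^ (-q)) ^ 3)) *
      √(2 * (3 * t ^ q) * C)) =o[atTop] fun t => t ^ (-p) := by
  have hlittle : ∀ r < -p, ∀ B : ℝ, (fun t : ℝ => B * t ^ r) =o[atTop] fun t => t ^ (-p) :=
    fun r hr B => (isLittleO_rpow_rpow_of_lt hr).const_mul_left B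
  refine ((hlittle (-q) (by linarith) C).add
    (((hlittle (-1 + q / 2) (by linarith) (A * √(6 * C))).add
      (hlittle (-p * 3 + q / 2) (by linarith) (M * κ ^ 3 * √(6 * C)))).add
      (hlittle (-q * 3 + q / 2) (by linarith) (M * √(6 * C))))).congr' ?_ EventuallyEq.rfl
  filter_upwards [eventually_gt_atTop 0] with t ht
  have hcube : ∀ r : ℝ, (t ^ r) ^ 3 = t ^ (r * 3) := fun r => by
    rw [← Real.rpow_mul_natCast ht.le]
    norm_num
  rw [show 2 * (3 * t ^ q) * C = 6 * C * t ^ q by ring, sqrt_mul_rpow _ _ ht.le, mul_pow,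
    hcube, hcube, Real.rpow_add ht, Real.rpow_add ht, Real.rpow_add ht, Real.rpow_neg_one]
  ring

/-! ### Dispersive flows with a nonnegative flux -/

/-- A classical solution `v` of the dispersive conservation law `∂ₜv + ∂ₓ³v + ∂ₓN = 0` with a
nonnegative flux `N`, both `∫ v²` and `∫ N` being bounded by `C` uniformly in time. The flux is an
independent function: how it depends on `v` is irrelevant to the localized virial argument. -/
structure IsDispersiveFlow (v N : ℝ → ℝ → ℝ) (C : ℝ) : Prop where
  contDiff : ContDiff ℝ 1 (uncurry v)
  contDiff_slice : ∀ t, ContDiff ℝ 3 (v t)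
  contDiff_flux : ∀ t, ContDiff ℝ 1 (N t)
  flux_nonneg : ∀ t x, 0 ≤ N t x
  equation : ∀ t x,
    deriv (fun s => v s x) t + iteratedDeriv 3 (v t) x + deriv (N t) x = 0
  integrable_sq : ∀ t, Integrable fun x => v t x ^ 2
  integrable_flux : ∀ t, Integrable (N t)
  integral_sq_le : ∀ t, ∫ x, v t x ^ 2 ≤ C
  integral_flux_le : ∀ t, ∫ x, N t x ≤ C

/-- The integral of `v t` against the window with scales `a t` and `b t`. Its growth in time is
the virial quantity controlling the flux near the origin. -/
noncomputable def localizedMomentum (v : ℝ → ℝ → ℝ) (a b : ℝ → ℝ) (t : ℝ) : ℝ :=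
  ∫ x, v t x * window (a t) (b t) x

namespace IsDispersiveFlow

variable {v N : ℝ → ℝ → ℝ} {C t : ℝ}

lemma deriv_mul_eq (h : IsDispersiveFlow v N C) {χ : ℝ → ℝ → ℝ} {x : ℝ}
    (hχ : DifferentiableAt ℝ (fun s => χ s x) t) :
    deriv (fun s => v s x * χ s x) t = v t x * deriv (fun s => χ s x) t -
      (deriv (N t) x * χ t x + iteratedDeriv 3 (v t) x * χ t x) := by
  have hv := hasDerivAt_left_of_differentiableAt_uncurry
    (h.contDiff.differentiable one_ne_zero (t, x))
  rw [deriv_fun_mul hv.differentiableAt hχ]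
  linear_combination χ t x * h.equation t x

lemma hasDerivAt_integral_mul (h : IsDispersiveFlow v N C) {χ : ℝ → ℝ → ℝ} {S : Set ℝ}
    (hχ : ∀ x, ContDiffAt ℝ 1 (uncurry χ) (t, x)) (hχt : ContDiff ℝ 3 (χ t)) (hS : IsCompact S)
    (hsupp : ∀ᶠ s in 𝓝 t, support (χ s) ⊆ S) :
    HasDerivAt (fun s => ∫ x, v s x * χ s x)
      ((∫ x, v t x * deriv (fun s => χ s x) t) + (∫ x, N t x * deriv (χ t) x) +
        ∫ x, v t x * iteratedDeriv 3 (χ t) x) t := by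
  have hvχ : ∀ x, ContDiffAt ℝ 1 (uncurry fun s x => v s x * χ s x) (t, x) := fun x =>
    h.contDiff.contDiffAt.mul (hχ x)
  have hvχ_supp : ∀ᶠ s in 𝓝 t, support (fun x => v s x * χ s x) ⊆ S :=
    hsupp.mono fun s hs => (support_mul_subset_right _ _).trans hs
  refine (hasDerivAt_integral_of_contDiffAt_of_support_subset hvχ hS hvχ_supp).congr_deriv ?_
  have hc : HasCompactSupport (χ t) := HasCompactSupport.of_support_subset_isCompact hS
    hsupp.self_of_nhds
  have hct : HasCompactSupport fun x => deriv (fun s => χ s x) t :=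
    HasCompactSupport.of_support_subset_isCompact hS (support_deriv_left_subset hsupp)
  have hv_int : Integrable fun x => v t x * deriv (fun s => χ s x) t :=
    ((h.contDiff_slice t).continuous.mul
      (continuous_deriv_left_of_contDiffAt hχ)).integrable_of_hasCompactSupport hct.mul_left
  have hN_int : Integrable fun x => deriv (N t) x * χ t x :=
    (((h.contDiff_flux t).continuous_deriv le_rfl).mul
      hχt.continuous).integrable_of_hasCompactSupport hc.mul_left
  have hv3_int : Integrable fun x => iteratedDeriv 3 (v t) x * χ t x :=
    (((h.contDiff_slice t).continuous_iteratedDeriv 3 le_rfl).mul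
      hχt.continuous).integrable_of_hasCompactSupport hc.mul_left
  have hN_parts : ∫ x, deriv (N t) x * χ t x = -∫ x, N t x * deriv (χ t) x := by
    simpa using integral_iteratedDeriv_mul_of_hasCompactSupport (n := 1) (h.contDiff_flux t)
      (hχt.of_le (by norm_num)) hc
  have hv3_parts : ∫ x, iteratedDeriv 3 (v t) x * χ t x =
      -∫ x, v t x * iteratedDeriv 3 (χ t) x := by
    refine (integral_iteratedDeriv_mul_of_hasCompactSupport (n := 3) (h.contDiff_slice t)
      hχt hc).trans ?_
    ring
  simp only [h.deriv_mul_eq (hasDerivAt_left_of_differentiableAt_uncurry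
    ((hχ _).differentiableAt one_ne_zero)).differentiableAt]
  rw [integral_sub hv_int (hN_int.fun_add hv3_int), integral_add hN_int hv3_int, hN_parts,
    hv3_parts]
  ring

lemma memLp (h : IsDispersiveFlow v N C) (t : ℝ) : MemLp (v t) 2 :=
  (memLp_two_iff_integrable_sq (h.contDiff_slice t).continuous.aestronglyMeasurable).2
    (h.integrable_sq t)

lemma abs_integral_mul_le (h : IsDispersiveFlow v N C) {θ : ℝ → ℝ} {A R : ℝ} (hA : 0 ≤ A)
    (hR : 0 ≤ R) (hθ : ∀ x, |θ x| ≤ A) (hsupp : support θ ⊆ Set.Icc (-R) R) :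
    |∫ x, v t x * θ x| ≤ A * √(2 * R * C) := by
  refine (abs_integral_mul_le_of_support_subset (h.memLp t) measurableSet_Icc
    isCompact_Icc.measure_ne_top hA hθ hsupp).trans ?_
  rw [Real.volume_real_Icc_of_le (by linarith), sub_neg_eq_add, ← two_mul]
  gcongr
  exact h.integral_sq_le t

lemma le_integral_flux_mul_deriv_window (h : IsDispersiveFlow v N C) {a b : ℝ} (ha : 0 < a)
    (hb : 0 ≤ b) :
    a * (∫ x in {x | |x| ≤ a⁻¹}, N t x) - b * C ≤ ∫ x, N t x * deriv (window a b) x := by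
  let S : Set ℝ := {x | |x| ≤ a⁻¹}
  have hS : MeasurableSet S := measurableSet_le measurable_abs measurable_const
  have hN := h.integrable_flux t
  have hN_window : Integrable fun x => N t x * deriv (window a b) x :=
    hN.mul_bdd ((contDiff_window a b (n := 1)).continuous_deriv le_rfl).aestronglyMeasurable
      (Eventually.of_forall (abs_deriv_window_le ha.le hb))
  have hpointwise : ∀ x, a * S.indicator (N t) x - b * N t x ≤ N t x * deriv (window a b) x := by
    intro x
    have hNx := h.flux_nonneg t x
    have hinner : S.indicator (N t) x ≤ N t x * plateau (a * x) := by
      by_cases hx : x ∈ S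
      · have hax : |a * x| ≤ 1 := by
          rw [abs_mul, abs_of_pos ha]
          exact (le_inv_mul_iff₀ ha).1 (hx.trans_eq (mul_one _).symm)
        rw [Set.indicator_of_mem hx, plateau_eq_one hax, mul_one]
      · rw [Set.indicator_of_notMem hx]
        exact mul_nonneg hNx plateau.nonneg
    rw [deriv_window]
    nlinarith [mul_le_mul_of_nonneg_left hinner ha.le,
      mul_le_mul_of_nonneg_left (mul_le_of_le_one_right hNx (plateau.le_one (x := b * x))) hb]
  calc a * (∫ x in S, N t x) - b * C
      ≤ a * (∫ x, S.indicator (N t) x) - b * ∫ x, N t x := by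
        rw [integral_indicator hS]
        gcongr
        exact h.integral_flux_le t
    _ = ∫ x, (a * S.indicator (N t) x - b * N t x) := by
        rw [integral_sub ((hN.indicator hS).const_mul a) (hN.const_mul b), integral_const_mul,
          integral_const_mul]
    _ ≤ ∫ x, N t x * deriv (window a b) x :=
        integral_mono (((hN.indicator hS).const_mul a).sub (hN.const_mul b)) hN_window hpointwise

lemma hasDerivAt_localizedMomentum (h : IsDispersiveFlow v N C) {a b : ℝ → ℝ} {R : ℝ}
    (ha : ContDiffAt ℝ 1 a t) (hb : ContDiffAt ℝ 1 b t) (ha0 : 0 < a t) (hb0 : 0 < b t)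
    (haR : 2 < a t * R) (hbR : 2 < b t * R) :
    HasDerivAt (localizedMomentum v a b)
      ((∫ x, v t x * deriv (fun s => window (a s) (b s) x) t) +
        (∫ x, N t x * deriv (window (a t) (b t)) x) +
        ∫ x, v t x * iteratedDeriv 3 (window (a t) (b t)) x) t := by
  have hramp : ∀ c : ℝ → ℝ, ContDiffAt ℝ 1 c t → ∀ x,
      ContDiffAt ℝ 1 (fun z : ℝ × ℝ => ramp (c z.1 * z.2)) (t, x) := fun c hc x =>
    (contDiff_ramp (n := 1)).contDiffAt.comp (t, x)
      ((hc.comp (t, x) contDiffAt_fst).mul contDiffAt_snd)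
  exact h.hasDerivAt_integral_mul (χ := fun s => window (a s) (b s))
    (fun x => (hramp a ha x).sub (hramp b hb x)) (contDiff_window (n := 3) _ _) isCompact_Icc
    (eventually_support_window_subset ha.continuousAt hb.continuousAt ha0 hb0 haR hbR)

lemma le_deriv_localizedMomentum (h : IsDispersiveFlow v N C) {a b : ℝ → ℝ} {R M : ℝ}
    (ha : ContDiffAt ℝ 1 a t) (hb : ContDiffAt ℝ 1 b t) (ha0 : 0 < a t) (hb0 : 0 < b t)
    (haR : 2 < a t * R) (hbR : 2 < b t * R) (hM : ∀ y, |iteratedDeriv 2 plateau y| ≤ M) :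
    a t * (∫ x in {x | |x| ≤ (a t)⁻¹}, N t x) - (b t * C +
      (2 * (|logDeriv a t| + |logDeriv b t|) + M * (a t ^ 3 + b t ^ 3)) * √(2 * R * C)) ≤
      deriv (localizedMomentum v a b) t := by
  have hR : 0 ≤ R := (pos_of_mul_pos_right (two_pos.trans haR) ha0.le).le
  have hM0 : 0 ≤ M := (abs_nonneg _).trans (hM 0)
  have hsupp := eventually_support_window_subset ha.continuousAt hb.continuousAt ha0 hb0 haR hbR
  have hsupp_three : support (iteratedDeriv 3 (window (a t) (b t))) ⊆ Set.Icc (-R) R :=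
    (support_iteratedDeriv_subset 3).trans (closure_minimal hsupp.self_of_nhds isClosed_Icc)
  have htransport : |∫ x, v t x * deriv (fun s => window (a s) (b s) x) t| ≤ _ :=
    h.abs_integral_mul_le (A := 2 * (|logDeriv a t| + |logDeriv b t|)) (by positivity) hR
      (abs_deriv_window_scale_le (ha.differentiableAt one_ne_zero) (hb.differentiableAt one_ne_zero)
        ha0.ne' hb0.ne') (support_deriv_left_subset hsupp)
  have hdispersion : |∫ x, v t x * iteratedDeriv 3 (window (a t) (b t)) x| ≤ _ :=
    h.abs_integral_mul_le (A := M * (a t ^ 3 + b t ^ 3)) (by positivity) hR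
      (abs_iteratedDeriv_three_window_le ha0.le hb0.le hM) hsupp_three
  have hflux := h.le_integral_flux_mul_deriv_window (t := t) ha0 hb0.le
  rw [(h.hasDerivAt_localizedMomentum ha hb ha0 hb0 haR hbR).deriv]
  linarith [abs_le.1 htransport, abs_le.1 hdispersion]

section PowerScales

variable {p q K : ℝ}

lemma isLittleO_localizedMomentum_rpow (h : IsDispersiveFlow v N C) (hK : 0 < K) (hpq : p < q)
    (hq : q < 2 - 2 * p) :
    localizedMomentum v (fun s => K⁻¹ * s ^ (-p)) (fun s => s ^ (-q)) =o[atTop]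
      fun t => t ^ (1 - p) := by
  have hsmall : (fun t : ℝ => t ^ (q / 2)) =o[atTop] fun t => t ^ (1 - p) :=
    isLittleO_rpow_rpow_of_lt (by linarith)
  refine IsBigO.trans_isLittleO (IsBigO.of_bound (4 * √(6 * C)) ?_) hsmall
  filter_upwards [eventually_gt_atTop 0,
    eventually_two_lt_window_scale_mul (inv_pos.2 hK) hpq] with t ht ⟨haR, hbR⟩
  have hbound := h.abs_integral_mul_le (t := t) (A := 4) (R := 3 * t ^ q) (by norm_num)
    (by positivity) (abs_window_le _ _)
    (support_window_subset (by positivity) (by positivity) haR.le hbR.le)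
  rwa [show 2 * (3 * t ^ q) * C = 6 * C * t ^ q by ring, sqrt_mul_rpow _ _ ht.le, ← mul_assoc,
    ← Real.norm_eq_abs, ← Real.norm_of_nonneg (Real.rpow_nonneg ht.le (q / 2))] at hbound

lemma eventually_le_deriv_localizedMomentum_rpow (h : IsDispersiveFlow v N C) (hK : 0 < K)
    (hpq : p < q) (hq_four : q < 4 * p) (hq_two : q < 2 - 2 * p) {δ : ℝ} (hδ : 0 < δ)
    (hflux : ∀ᶠ t in atTop, δ ≤ ∫ x in {x | |x| ≤ K * t ^ p}, N t x) :
    ∀ᶠ t in atTop, K⁻¹ * δ / 2 * t ^ (-p) ≤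
      deriv (localizedMomentum v (fun s => K⁻¹ * s ^ (-p)) fun s => s ^ (-q)) t := by
  obtain ⟨M, hM⟩ := exists_abs_iteratedDeriv_plateau_le 2
  have herror := (isLittleO_window_error hpq hq_four hq_two K⁻¹ (2 * (|p| + |q|)) M C).bound
    (half_pos (mul_pos (inv_pos.2 hK) hδ))
  filter_upwards [eventually_gt_atTop 0, hflux, herror,
    eventually_two_lt_window_scale_mul (inv_pos.2 hK) hpq] with t ht hflux herror ⟨haR, hbR⟩
  have hderiv := h.le_deriv_localizedMomentum (t := t) (a := fun s => K⁻¹ * s ^ (-p))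
    (b := fun s => s ^ (-q)) (contDiffAt_const.mul (Real.contDiffAt_rpow_const_of_ne ht.ne'))
    (Real.contDiffAt_rpow_const_of_ne ht.ne') (by positivity) (by positivity) haR hbR hM
  have hlog : 2 * (|logDeriv (fun s => K⁻¹ * s ^ (-p)) t| + |logDeriv (fun s => s ^ (-q)) t|) =
      2 * (|p| + |q|) / t := by
    rw [logDeriv_const_mul _ _ (inv_ne_zero hK.ne'), logDeriv_rpow_const _ ht,
      logDeriv_rpow_const _ ht, abs_div, abs_div, abs_neg, abs_neg, abs_of_pos ht]
    ring
  have hscale : (K⁻¹ * t ^ (-p))⁻¹ = K * t ^ p := by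
    rw [mul_inv, inv_inv, Real.rpow_neg ht.le, inv_inv]
  rw [hlog, hscale] at hderiv
  have hmass := mul_le_mul_of_nonneg_left hflux (a := K⁻¹ * t ^ (-p)) (by positivity)
  rw [Real.norm_of_nonneg (Real.rpow_nonneg ht.le (-p))] at herror
  linarith [(le_abs_self _).trans herror]

end PowerScales

theorem frequently_setIntegral_flux_lt (h : IsDispersiveFlow v N C) {p K : ℝ} (hp : 0 < p)
    (hp' : p < 2 / 3) (hK : 0 < K) {δ : ℝ} (hδ : 0 < δ) :
    ∃ᶠ t in atTop, ∫ x in {x | |x| ≤ K * t ^ p}, N t x < δ := by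
  intro hcon
  have hflux : ∀ᶠ t in atTop, δ ≤ ∫ x in {x | |x| ≤ K * t ^ p}, N t x :=
    hcon.mono fun t ht => not_lt.1 ht
  obtain ⟨q, hpq, hq⟩ := exists_between (show p < min (4 * p) (2 - 2 * p) from
    lt_min (by linarith) (by linarith))
  obtain ⟨hq_four, hq_two⟩ := lt_min_iff.1 hq
  exact not_isLittleO_of_rpow_le_deriv (by linarith) (half_pos (mul_pos (inv_pos.2 hK) hδ))
    (h.eventually_le_deriv_localizedMomentum_rpow hK hpq hq_four hq_two hδ hflux)
    (h.isLittleO_localizedMomentum_rpow hK hpq hq_two)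

end IsDispersiveFlow

/-! ### The forced Korteweg–de Vries equation -/

/-- A classical solution `v` of the Korteweg–de Vries equation `∂ₜv + ∂ₓ³v + v ∂ₓv = γ ∂ₓw` forced
by a nonnegative density `w`, with `∫ v²` and `∫ w` bounded uniformly in time. In the
Schrödinger–Korteweg–de Vries system `w = |u|²`. -/
structure IsForcedKdVSolution (γ : ℝ) (v w : ℝ → ℝ → ℝ) : Prop where
  contDiff : ContDiff ℝ 1 (uncurry v)
  contDiff_slice : ∀ t, ContDiff ℝ 3 (v t)
  contDiff_forcing : ∀ t, ContDiff ℝ 1 (w t)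
  forcing_nonneg : ∀ t x, 0 ≤ w t x
  equation : ∀ t x, deriv (fun s => v s x) t + iteratedDeriv 3 (v t) x + v t x * deriv (v t) x =
    γ * deriv (w t) x
  integrable_sq : ∀ t, Integrable fun x => v t x ^ 2
  integrable_forcing : ∀ t, Integrable (w t)
  exists_integral_add_le : ∃ C, ∀ t, (∫ x, v t x ^ 2) + ∫ x, w t x ≤ C

lemma IsForcedKdVSolution.exists_isDispersiveFlow {γ : ℝ} {v w : ℝ → ℝ → ℝ}
    (h : IsForcedKdVSolution γ v w) (hγ : γ ≤ 0) :
    ∃ C, IsDispersiveFlow v (fun t x => v t x ^ 2 / 2 - γ * w t x) C := by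
  obtain ⟨C, hC⟩ := h.exists_integral_add_le
  have hv_nonneg : ∀ t, 0 ≤ ∫ x, v t x ^ 2 := fun t => integral_nonneg fun x => sq_nonneg _
  have hw_nonneg : ∀ t, 0 ≤ ∫ x, w t x := fun t => integral_nonneg (h.forcing_nonneg t)
  have hv_slice : ∀ t, ContDiff ℝ 1 (v t) := fun t => (h.contDiff_slice t).of_le (by norm_num)
  refine ⟨(1 - γ) * C, h.contDiff, h.contDiff_slice, fun t => ?_, fun t x => ?_, fun t x => ?_,
    h.integrable_sq, fun t => ?_, fun t => ?_, fun t => ?_⟩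
  · exact (((hv_slice t).pow 2).div_const 2).sub (contDiff_const.mul (h.contDiff_forcing t))
  · nlinarith [h.forcing_nonneg t x, sq_nonneg (v t x)]
  · have hv := ((hv_slice t).differentiable one_ne_zero x).hasDerivAt
    have hw := ((h.contDiff_forcing t).differentiable one_ne_zero x).hasDerivAt
    have hflux := (((hv.pow 2).div_const 2).sub (hw.const_mul γ)).deriv
    refine (congrArg (_ + ·) hflux).trans ?_
    simp only [Nat.cast_ofNat]
    linear_combination h.equation t x
  · exact ((h.integrable_sq t).div_const 2).sub ((h.integrable_forcing t).const_mul γ)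
  · nlinarith [hC t, hv_nonneg t, hw_nonneg t]
  · rw [integral_sub ((h.integrable_sq t).div_const 2) ((h.integrable_forcing t).const_mul γ),
      integral_div, integral_const_mul]
    nlinarith [hC t, hv_nonneg t, hw_nonneg t]

lemma IsForcedKdVSolution.liminf_setIntegral_eq_zero {γ : ℝ} {v w : ℝ → ℝ → ℝ}
    (h : IsForcedKdVSolution γ v w) (hγ : γ ≤ 0) {p K : ℝ} (hp : 0 < p) (hp' : p < 2 / 3)
    (hK : 0 < K) {ρ : ℝ → ℝ → ℝ} {c : ℝ} (hc : 0 < c) (hρ : ∀ t, Integrable (ρ t))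
    (hρ0 : ∀ t x, 0 ≤ ρ t x) (hρc : ∀ t x, ρ t x ≤ c * (v t x ^ 2 / 2 - γ * w t x)) :
    liminf (fun t => ∫ x in {x | |x| ≤ K * t ^ p}, ρ t x) atTop = 0 := by
  obtain ⟨C, hflow⟩ := h.exists_isDispersiveFlow hγ
  refine liminf_eq_zero_of_le_mul hc (fun t => integral_nonneg (hρ0 t)) (fun t => ?_)
    fun δ hδ => hflow.frequently_setIntegral_flux_lt hp hp' hK hδ
  rw [← integral_const_mul]
  exact integral_mono (hρ t).integrableOn ((hflow.integrable_flux t).const_mul _).integrableOn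
    (hρc t)

lemma IsSKdVSolution.isForcedKdVSolution {α β γ : ℝ} {u : ℝ → ℝ → ℂ} {v : ℝ → ℝ → ℝ}
    (h : IsSKdVSolution α β γ u v) : IsForcedKdVSolution γ v fun t x => ‖u t x‖ ^ 2 := by
  obtain ⟨hu, hv, hu_schwartz, hv_schwartz, -, hequation, C, hC⟩ := h
  have hv_slice : ∀ t, ContDiff ℝ 3 (v t) := fun t =>
    contDiff_infty.1 (hv.comp (contDiff_const.prodMk contDiff_id)) 3
  have hu_slice : ∀ t, ContDiff ℝ 1 (u t) := fun t =>
    contDiff_infty.1 (hu.comp (contDiff_const.prodMk contDiff_id)) 1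
  refine ⟨contDiff_infty.1 hv 1, hv_slice, fun t => (hu_slice t).norm_sq ℝ,
    fun t x => sq_nonneg _, hequation, fun t => ?_, fun t => ?_, C, fun t => ?_⟩
  · obtain ⟨f, hf⟩ := hv_schwartz t
    simpa [hf] using (f.memLp 2 volume).integrable_norm_pow (by norm_num)
  · obtain ⟨f, hf⟩ := hu_schwartz t
    simpa [hf] using (f.memLp 2 volume).integrable_norm_pow (by norm_num)
  · have hu_deriv : 0 ≤ ∫ x, ‖deriv (u t) x‖ ^ 2 := integral_nonneg fun x => sq_nonneg _
    have hv_deriv : 0 ≤ ∫ x, deriv (v t) x ^ 2 := integral_nonneg fun x => sq_nonneg _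
    linarith [hC t]

theorem skdv_L2_decay_general {γ : ℝ} (hγ : γ < 0) {v w : ℝ → ℝ → ℝ}
    (h : IsForcedKdVSolution γ v w) {p K : ℝ} (hp : 0 < p) (hp' : p < 2 / 3) (hK : 0 < K) :
    liminf (fun t : ℝ => ∫ x in {x : ℝ | |x| ≤ K * t ^ p}, (v t x ^ 2 + w t x)) atTop = 0 ∧
    liminf (fun t : ℝ => ∫ x in {x : ℝ | |x| ≤ K * t ^ p}, v t x ^ 2) atTop = 0 ∧
    liminf (fun t : ℝ => ∫ x in {x : ℝ | |x| ≤ K * t ^ p}, w t x) atTop = 0 := by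
  have hγ_mul : γ⁻¹ * γ = 1 := inv_mul_cancel₀ hγ.ne
  have hγ_inv : γ⁻¹ < 0 := inv_lt_zero.2 hγ
  have hv_nonneg : ∀ t x, 0 ≤ v t x ^ 2 := fun t x => sq_nonneg _
  have hw_nonneg := h.forcing_nonneg
  have hv_le : ∀ t x, v t x ^ 2 ≤ 2 * (v t x ^ 2 / 2 - γ * w t x) := fun t x => by
    nlinarith [hw_nonneg t x]
  have hw_le : ∀ t x, w t x ≤ -γ⁻¹ * (v t x ^ 2 / 2 - γ * w t x) := fun t x => by
    linear_combination (1 / 2) * mul_nonpos_of_nonpos_of_nonneg hγ_inv.le (hv_nonneg t x) -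
      w t x * hγ_mul
  refine ⟨h.liminf_setIntegral_eq_zero hγ.le hp hp' hK (c := 2 + -γ⁻¹) (by linarith)
      (fun t => (h.integrable_sq t).add (h.integrable_forcing t))
      (fun t x => add_nonneg (hv_nonneg t x) (hw_nonneg t x)) fun t x => ?_,
    h.liminf_setIntegral_eq_zero hγ.le hp hp' hK two_pos h.integrable_sq hv_nonneg hv_le,
    h.liminf_setIntegral_eq_zero hγ.le hp hp' hK (neg_pos.2 hγ_inv) h.integrable_forcing
      hw_nonneg hw_le⟩
  rw [add_mul]
  exact add_le_add (hv_le t x) (hw_le t x)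

/-- Decay of the `L²` mass of `(u,v)` on the growing regions `|x| ≤ K t^{p₁}`,
    `0 < p₁ < 2/3`, along a sequence of times. -/
theorem skdv_L2_decay (α β γ : ℝ) (hα : α < 0) (hγ : γ < 0)
    (u : ℝ → ℝ → ℂ) (v : ℝ → ℝ → ℝ) (hsol : IsSKdVSolution α β γ u v)
    (p₁ K : ℝ) (hp₁ : 0 < p₁) (hp₁' : p₁ < 2 / 3) (hK : 0 < K) :
    liminf (fun t : ℝ =>
        ∫ x in {x : ℝ | |x| ≤ K * t ^ p₁}, ((v t x) ^ 2 + ‖u t x‖ ^ 2)) atTop = 0 ∧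
    liminf (fun t : ℝ =>
        ∫ x in {x : ℝ | |x| ≤ K * t ^ p₁}, (v t x) ^ 2) atTop = 0 ∧
    liminf (fun t : ℝ =>
        ∫ x in {x : ℝ | |x| ≤ K * t ^ p₁}, ‖u t x‖ ^ 2) atTop = 0 :=
  skdv_L2_decay_general hγ hsol.isForcedKdVSolution hp₁ hp₁' hK
end

section
/- Let α < 0, γ < 0 and β > 0, and let (u,v) be a regular solution of the Schrödinger–Korteweg–de Vries system with these parameters. Then for every exponent p₁ with 0 < p₁ < 2/3 and every constant K > 0, liminf_{t→∞} ∫_{{x : |x| ≤ K·t^{p₁}}} ( (∂ₓv(t,x))² + |∂ₓu(t,x)|² ) dx = 0 and also liminf_{t→∞} ∫_{{x : |x| ≤ K·t^{p₁}}} |u(t,x)|⁴ dx = 0. -/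
open MeasureTheory Filter

/-!
Choose `L` large and add `L ∫ v` to the conserved momentum `∫ (α/2) v² - γ Im (ū ∂ₓu)`. The
resulting density `D` satisfies `∂ₜD = -∂ₓW + ∂ₓ³Q`, where `W` is bounded below and above by
multiples of the `H¹` energy density `e`, `Q` is bounded and `D = O(e + √e)`; the sign conditions on
`α` and `γ` make the quadratic terms of `W` positive, and `L` absorbs the cubic and quartic ones,
since `u` and `v` are bounded.

Test this law against a weight `ψ` supported in `|x| ≲ m` with `ψ' = 1/l` on `|x| ≤ l` and
`ψ' ≥ -1/m`. The virial `∫ ψ D` is `O(R + m/R)` for every `R ≥ 1`, so with `m = R²` its mean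
derivative over `[R³, 2R³]` is `O(R⁻²)`. At a time `t` where the derivative equals this mean,
`∫_{|x| ≤ l} e ≲ l/R² + 1/l`, and `l = δ R²`, which is of the order `δ t^{2/3}`, makes the
right-hand side as small as desired.
-/

namespace SKdV

open Asymptotics Topology
open scoped ContDiff

section DirectionalDerivative

variable {V E G : Type*} [NormedAddCommGroup V] [NormedSpace ℝ V]
  [NormedAddCommGroup E] [NormedSpace ℝ E] [NormedAddCommGroup G] [NormedSpace ℝ G]

/-- The derivative of `F` along `w`, as a function of the base point. The partial derivatives of a
function of `p = (t, x)` are `∂ₜ = dirDeriv (1, 0)` and `∂ₓ = dirDeriv (0, 1)`. -/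
noncomputable def dirDeriv (w : V) (F : V → E) (p : V) : E := fderiv ℝ F p w

theorem contDiff_dirDeriv {m n : WithTop ℕ∞} {F : V → E} (hF : ContDiff ℝ n F) (hmn : m + 1 ≤ n)
    (w : V) : ContDiff ℝ m (dirDeriv w F) :=
  (hF.fderiv_right hmn).clm_apply contDiff_const

theorem dirDeriv_comm {F : V → E} (hF : ContDiff ℝ 2 F) (w w' : V) :
    dirDeriv w (dirDeriv w' F) = dirDeriv w' (dirDeriv w F) := by
  have hF' : Differentiable ℝ (fderiv ℝ F) :=
    (hF.fderiv_right (m := 1) (by norm_num)).differentiable one_ne_zero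
  have second_deriv (p a b : V) :
      dirDeriv a (dirDeriv b F) p = fderiv ℝ (fderiv ℝ F) p a b := by
    change fderiv ℝ (fun q => fderiv ℝ F q b) p a = _
    rw [fderiv_clm_apply (hF' p) (differentiableAt_const b)]
    simp
  funext p
  rw [second_deriv, second_deriv, (hF.contDiffAt.isSymmSndFDerivAt (by simp)).eq]

theorem dirDeriv_add {F H : V → E} (hF : Differentiable ℝ F) (hH : Differentiable ℝ H) (w : V) :
    dirDeriv w (fun p => F p + H p) = fun p => dirDeriv w F p + dirDeriv w H p := by
  funext p
  simp [dirDeriv, fderiv_fun_add (hF p) (hH p)]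

theorem dirDeriv_sub {F H : V → E} (hF : Differentiable ℝ F) (hH : Differentiable ℝ H) (w : V) :
    dirDeriv w (fun p => F p - H p) = fun p => dirDeriv w F p - dirDeriv w H p := by
  funext p
  simp [dirDeriv, fderiv_fun_sub (hF p) (hH p)]

theorem dirDeriv_neg (F : V → E) (w : V) :
    dirDeriv w (fun p => -F p) = fun p => -dirDeriv w F p := by
  funext p
  simp [dirDeriv]

theorem dirDeriv_mul {F H : V → ℝ} (hF : Differentiable ℝ F) (hH : Differentiable ℝ H) (w : V) :
    dirDeriv w (fun p => F p * H p) = fun p => dirDeriv w F p * H p + F p * dirDeriv w H p := by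
  funext p
  simp only [dirDeriv, fderiv_fun_mul (hF p) (hH p), add_apply, smul_apply, smul_eq_mul]
  ring

theorem dirDeriv_const (c : E) (w : V) : dirDeriv w (fun _ => c) = fun _ => 0 := by
  funext p
  simp [dirDeriv]

theorem dirDeriv_clm_comp (T : E →L[ℝ] G) {F : V → E} (hF : Differentiable ℝ F) (w p : V) :
    dirDeriv w (fun q => T (F q)) p = T (dirDeriv w F p) := by
  exact congrArg (· w) (T.hasFDerivAt.comp p (hF p).hasFDerivAt).fderiv

end DirectionalDerivative

local notation "∂ₜ" => dirDeriv ((1, 0) : ℝ × ℝ)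
local notation "∂ₓ" => dirDeriv ((0, 1) : ℝ × ℝ)

section Slices

variable {E : Type*} [NormedAddCommGroup E] [NormedSpace ℝ E] {F : ℝ × ℝ → E}

theorem hasDerivAt_timeSlice (hF : Differentiable ℝ F) (t x : ℝ) :
    HasDerivAt (fun s => F (s, x)) (∂ₜ F (t, x)) t :=
  (hF (t, x)).hasFDerivAt.comp_hasDerivAt t ((hasDerivAt_id t).prodMk (hasDerivAt_const t x))

theorem hasDerivAt_spaceSlice (hF : Differentiable ℝ F) (t x : ℝ) :
    HasDerivAt (fun y => F (t, y)) (∂ₓ F (t, x)) x :=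
  (hF (t, x)).hasFDerivAt.comp_hasDerivAt x ((hasDerivAt_const x t).prodMk (hasDerivAt_id x))

theorem iteratedDeriv_spaceSlice {n : ℕ} (hF : ContDiff ℝ n F) (t : ℝ) :
    iteratedDeriv n (fun y => F (t, y)) = fun x => (∂ₓ)^[n] F (t, x) := by
  induction n generalizing F with
  | zero => simp
  | succ n ih =>
    rw [iteratedDeriv_succ', funext fun x =>
      (hasDerivAt_spaceSlice (hF.differentiable (by simp)) t x).deriv]
    exact ih (contDiff_dirDeriv hF (by simp) _)

end Slices

section CompactlySupportedWeights

theorem integral_mul_iteratedDeriv_of_hasCompactSupport (n : ℕ) {ψ G : ℝ → ℝ}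
    (hψ : ContDiff ℝ n ψ) (hψc : HasCompactSupport ψ) (hG : ContDiff ℝ n G) :
    ∫ x, ψ x * iteratedDeriv n G x = (-1) ^ n * ∫ x, iteratedDeriv n ψ x * G x := by
  induction n generalizing ψ with
  | zero => simp
  | succ n ih =>
    have hψ' : ContDiff ℝ n (deriv ψ) := (contDiff_succ_iff_deriv.1 hψ).2.2
    have integrable_mul {φ H : ℝ → ℝ} (hφ : Continuous φ) (hH : Continuous H)
        (hφc : HasCompactSupport φ) : Integrable (φ * H) :=
      (hφ.mul hH).integrable_of_hasCompactSupport hφc.mul_right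
    have hGn : ContDiff ℝ 1 (iteratedDeriv n G) := by
      rw [iteratedDeriv_eq_iterate]
      exact ContDiff.iterate_deriv' 1 n (by rwa [add_comm] at hG)
    have hψ1 := hψ.of_le (m := 1) (by simp)
    have parts : ∫ x, ψ x * iteratedDeriv (n + 1) G x =
        -∫ x, deriv ψ x * iteratedDeriv n G x := by
      rw [iteratedDeriv_succ]
      exact integral_mul_deriv_eq_deriv_mul_of_integrable
        (fun x _ => (hψ1.differentiable one_ne_zero x).hasDerivAt)
        (fun x _ => (hGn.differentiable one_ne_zero x).hasDerivAt)
        (integrable_mul hψ.continuous (hGn.continuous_deriv le_rfl) hψc)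
        (integrable_mul (hψ1.continuous_deriv le_rfl) hGn.continuous hψc.deriv)
        (integrable_mul hψ.continuous hGn.continuous hψc)
    rw [parts, ih hψ' hψc.deriv (hG.of_le (by simp)), iteratedDeriv_succ']
    ring

theorem hasDerivAt_integral_mul_of_hasCompactSupport {ψ : ℝ → ℝ} {D : ℝ × ℝ → ℝ}
    (hψ : Continuous ψ) (hψc : HasCompactSupport ψ) (hD : ContDiff ℝ 1 D) (t : ℝ) :
    HasDerivAt (fun s => ∫ x, ψ x * D (s, x)) (∫ x, ψ x * ∂ₜ D (t, x)) t := by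
  have hDc := hD.continuous
  have hD'c := (contDiff_dirDeriv (m := 0) hD (by simp) (1, 0)).continuous
  obtain ⟨C, hC⟩ := ((isCompact_closedBall t 1).prod hψc).exists_bound_of_continuousOn
    hD'c.continuousOn
  have bound (x s : ℝ) (hs : s ∈ Metric.ball t 1) : ‖ψ x * ∂ₜ D (s, x)‖ ≤ ‖ψ x‖ * C := by
    rw [norm_mul]
    by_cases hx : x ∈ tsupport ψ
    · gcongr
      exact hC (s, x) ⟨Metric.ball_subset_closedBall hs, hx⟩
    · simp [image_eq_zero_of_notMem_tsupport hx]
  refine (hasDerivAt_integral_of_dominated_loc_of_deriv_le (Metric.ball_mem_nhds t one_pos)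
    (.of_forall fun s => Continuous.aestronglyMeasurable (by fun_prop))
    (Continuous.integrable_of_hasCompactSupport (by fun_prop) hψc.mul_right)
    (Continuous.aestronglyMeasurable (by fun_prop)) (.of_forall bound)
    (Continuous.integrable_of_hasCompactSupport (by fun_prop) hψc.norm.mul_right)
    (.of_forall fun x s _ =>
      (hasDerivAt_timeSlice (hD.differentiable one_ne_zero) s x).const_mul (ψ x))).2

end CompactlySupportedWeights

section AnnularWeight

variable (b : ContDiffBump (0 : ℝ)) {l m : ℝ}

/-- The weight `x ↦ ∫_{x/m}^{x/l} b` attached to a bump `b` and two scales `l ≤ m`: it is supported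
in `|x| ≲ m`, and its slope is the bump at scale `l` minus the bump at scale `m`. -/
noncomputable def annularWeight (l m x : ℝ) : ℝ := ∫ s in m⁻¹ * x..l⁻¹ * x, b s

theorem abs_annularWeight_le (l m x : ℝ) : |annularWeight b l m x| ≤ ∫ s, b s := by
  rw [← Real.norm_eq_abs]
  calc ‖annularWeight b l m x‖ ≤ ∫ s in Set.uIoc (m⁻¹ * x) (l⁻¹ * x), ‖b s‖ :=
        intervalIntegral.norm_integral_le_integral_norm_uIoc
    _ ≤ ∫ s, ‖b s‖ :=
        setIntegral_le_integral b.integrable.norm (.of_forall fun s => norm_nonneg (b s))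
    _ = ∫ s, b s := by simp only [Real.norm_of_nonneg b.nonneg]

theorem abs_annularWeight_mul_le (l m x : ℝ) {y z d : ℝ} (hy : 0 ≤ y) (hd : |d| ≤ y + z) :
    |annularWeight b l m x * d| ≤ (∫ s, b s) * y + z * |annularWeight b l m x| := by
  calc |annularWeight b l m x * d| = |annularWeight b l m x| * |d| := abs_mul _ _
    _ ≤ |annularWeight b l m x| * (y + z) := by gcongr
    _ = |annularWeight b l m x| * y + z * |annularWeight b l m x| := by ring
    _ ≤ (∫ s, b s) * y + z * |annularWeight b l m x| := by
        gcongr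
        exact abs_annularWeight_le b l m x

theorem annularWeight_eq_zero (hl : 0 < l) (hlm : l ≤ m) {x : ℝ} (hx : m * b.rOut ≤ |x|) :
    annularWeight b l m x = 0 := by
  have hm : 0 < m := hl.trans_le hlm
  refine (intervalIntegral.integral_congr fun s hs => b.zero_of_le_dist ?_).trans
    intervalIntegral.integral_zero
  have hml : m⁻¹ ≤ l⁻¹ := by gcongr
  have hm_le : b.rOut ≤ m⁻¹ * |x| := (le_inv_mul_iff₀ hm).2 hx
  rw [Real.dist_0_eq_abs]
  rcases le_total 0 x with h0 | h0
  · rw [abs_of_nonneg h0] at hm_le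
    rw [Set.uIcc_of_le (by gcongr)] at hs
    exact hm_le.trans (hs.1.trans (le_abs_self s))
  · rw [abs_of_nonpos h0] at hm_le
    rw [Set.uIcc_of_ge (mul_le_mul_of_nonpos_right hml h0)] at hs
    linarith [neg_le_abs s, hs.2]

theorem hasCompactSupport_annularWeight (hl : 0 < l) (hlm : l ≤ m) :
    HasCompactSupport (annularWeight b l m) :=
  .intro (isCompact_Icc (a := -(m * b.rOut)) (b := m * b.rOut)) fun _ hx =>
    annularWeight_eq_zero b hl hlm (not_le.1 (mt abs_le.1 hx)).le

theorem integral_abs_annularWeight_le (hl : 0 < l) (hlm : l ≤ m) :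
    ∫ x, |annularWeight b l m x| ≤ (∫ s, b s) * (2 * (m * b.rOut)) := by
  have hm : 0 < m := hl.trans_le hlm
  have hr := b.rOut_pos
  rw [← setIntegral_eq_integral_of_forall_compl_eq_zero
    (s := Set.Icc (-(m * b.rOut)) (m * b.rOut)) fun x hx => abs_eq_zero.2 <|
      annularWeight_eq_zero b hl hlm (not_le.1 (mt abs_le.1 hx)).le]
  have bound := norm_setIntegral_le_of_norm_le_const (μ := volume)
    (s := Set.Icc (-(m * b.rOut)) (m * b.rOut)) measure_Icc_lt_top
    (f := fun x => |annularWeight b l m x|) (C := ∫ s, b s)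
    fun x _ => by simpa using abs_annularWeight_le b l m x
  rw [Real.volume_real_Icc_of_le (by linarith [mul_pos hm hr])] at bound
  exact (le_abs_self _).trans (bound.trans_eq (by ring))

theorem hasDerivAt_annularWeight (l m x : ℝ) :
    HasDerivAt (annularWeight b l m) (l⁻¹ * b (l⁻¹ * x) - m⁻¹ * b (m⁻¹ * x)) x := by
  have interval_integrable (y z : ℝ) : IntervalIntegrable b volume y z :=
    b.continuous.intervalIntegrable y z
  have primitive (r : ℝ) :
      HasDerivAt (fun y => ∫ s in (0 : ℝ)..r⁻¹ * y, b s) (r⁻¹ * b (r⁻¹ * x)) x := by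
    have := (b.continuous.integral_hasStrictDerivAt 0 (r⁻¹ * x)).hasDerivAt.comp x
      ((hasDerivAt_id x).const_mul r⁻¹)
    rwa [mul_one, mul_comm] at this
  exact ((primitive l).sub (primitive m)).congr_of_eventuallyEq <| .of_forall fun y =>
    (intervalIntegral.integral_interval_sub_left (interval_integrable _ _)
      (interval_integrable _ _)).symm

theorem deriv_annularWeight (l m : ℝ) :
    deriv (annularWeight b l m) = fun x => l⁻¹ * b (l⁻¹ * x) - m⁻¹ * b (m⁻¹ * x) :=
  funext fun x => (hasDerivAt_annularWeight b l m x).deriv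

theorem indicator_le_deriv_annularWeight_mul (hl : 0 < l) (hm : 0 < m) {y w z : ℝ} (hy : 0 ≤ y)
    (hyw : y ≤ w) (hwz : w ≤ z) (x : ℝ) :
    {x | |x| ≤ l * b.rIn}.indicator (fun _ => y) x ≤
      l * (deriv (annularWeight b l m) x * w) + l / m * z := by
  have hw : 0 ≤ w := hy.trans hyw
  have near : {x | |x| ≤ l * b.rIn}.indicator (fun _ => y) x ≤ b (l⁻¹ * x) * w := by
    refine Set.indicator_apply_le' (fun hx => ?_) fun _ => mul_nonneg b.nonneg hw
    replace hx : |x| ≤ l * b.rIn := hx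
    rwa [b.one_of_mem_closedBall, one_mul]
    simpa [abs_mul, abs_of_pos hl, inv_mul_le_iff₀ hl] using hx
  have far : b (m⁻¹ * x) * w ≤ z := (mul_le_of_le_one_left hw b.le_one).trans hwz
  calc {x | |x| ≤ l * b.rIn}.indicator (fun _ => y) x
      ≤ b (l⁻¹ * x) * w + l / m * (z - b (m⁻¹ * x) * w) :=
        near.trans (le_add_of_nonneg_right (mul_nonneg (by positivity) (sub_nonneg.2 far)))
    _ = l * (deriv (annularWeight b l m) x * w) + l / m * z := by
        rw [deriv_annularWeight]
        field_simp
        ring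

theorem contDiff_annularWeight (l m : ℝ) : ContDiff ℝ ∞ (annularWeight b l m) := by
  refine contDiff_infty_iff_deriv.2
    ⟨fun x => (hasDerivAt_annularWeight b l m x).differentiableAt, ?_⟩
  have hb : ContDiff ℝ ∞ b := b.contDiff
  rw [deriv_annularWeight]
  fun_prop

theorem iteratedDeriv_succ_annularWeight (n : ℕ) (l m : ℝ) :
    iteratedDeriv (n + 1) (annularWeight b l m) = fun x =>
      l⁻¹ ^ (n + 1) * iteratedDeriv n b (l⁻¹ * x) -
        m⁻¹ ^ (n + 1) * iteratedDeriv n b (m⁻¹ * x) := by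
  have hb : ContDiff ℝ n b := b.contDiff
  have rescaled (r : ℝ) : ContDiff ℝ n fun x => r⁻¹ * b (r⁻¹ * x) := by fun_prop
  funext x
  rw [iteratedDeriv_succ', deriv_annularWeight,
    iteratedDeriv_fun_sub (rescaled l).contDiffAt (rescaled m).contDiffAt]
  simp only [iteratedDeriv_const_mul_field, iteratedDeriv_comp_const_mul hb]
  ring

theorem integral_abs_iteratedDeriv_succ_annularWeight_le (n : ℕ) (hl : 0 < l) (hlm : l ≤ m) :
    ∫ x, |iteratedDeriv (n + 1) (annularWeight b l m) x| ≤
      2 * (∫ x, |iteratedDeriv n b x|) / l ^ n := by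
  have hm : 0 < m := hl.trans_le hlm
  have hb : Integrable fun x => |iteratedDeriv n b x| :=
    ((b.contDiff.continuous_iteratedDeriv n le_rfl).integrable_of_hasCompactSupport <| by
      rw [iteratedDeriv_eq_equiv_comp]
      exact (b.hasCompactSupport.iteratedFDeriv n).comp_left (map_zero _)).abs
  have integrable_rescaled {r : ℝ} (hr : 0 < r) :
      Integrable fun x => r⁻¹ ^ (n + 1) * |iteratedDeriv n b (r⁻¹ * x)| :=
    (hb.comp_mul_left' (inv_ne_zero hr.ne')).const_mul _
  have integral_rescaled {r : ℝ} (hr : 0 < r) :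
      ∫ x, r⁻¹ ^ (n + 1) * |iteratedDeriv n b (r⁻¹ * x)| =
        (∫ x, |iteratedDeriv n b x|) / r ^ n := by
    rw [integral_const_mul, Measure.integral_comp_inv_mul_left (fun x => |iteratedDeriv n b x|),
      abs_of_pos hr, smul_eq_mul, inv_pow, pow_succ]
    field_simp
  have : 0 ≤ ∫ x, |iteratedDeriv n b x| := integral_nonneg fun x => abs_nonneg _
  calc ∫ x, |iteratedDeriv (n + 1) (annularWeight b l m) x|
      ≤ ∫ x, (l⁻¹ ^ (n + 1) * |iteratedDeriv n b (l⁻¹ * x)| +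
          m⁻¹ ^ (n + 1) * |iteratedDeriv n b (m⁻¹ * x)|) := by
        refine integral_mono_of_nonneg (.of_forall fun x => abs_nonneg _)
          ((integrable_rescaled hl).add (integrable_rescaled hm)) (.of_forall fun x => ?_)
        simpa [iteratedDeriv_succ_annularWeight, abs_mul, abs_of_pos hl, abs_of_pos hm] using
          abs_sub (l⁻¹ ^ (n + 1) * iteratedDeriv n b (l⁻¹ * x))
            (m⁻¹ ^ (n + 1) * iteratedDeriv n b (m⁻¹ * x))
    _ = (∫ x, |iteratedDeriv n b x|) / l ^ n + (∫ x, |iteratedDeriv n b x|) / m ^ n := by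
        rw [integral_add (integrable_rescaled hl) (integrable_rescaled hm),
          integral_rescaled hl, integral_rescaled hm]
    _ ≤ (∫ x, |iteratedDeriv n b x|) / l ^ n + (∫ x, |iteratedDeriv n b x|) / l ^ n := by gcongr
    _ = 2 * (∫ x, |iteratedDeriv n b x|) / l ^ n := by ring

end AnnularWeight

theorem hasDerivAt_integral_mul_of_balance {D W Q : ℝ × ℝ → ℝ} (hD : ContDiff ℝ 1 D)
    (hW : ContDiff ℝ 1 W) (hQ : ContDiff ℝ 3 Q)
    (balance : ∀ p, ∂ₜ D p = -∂ₓ W p + ∂ₓ (∂ₓ (∂ₓ Q)) p)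
    {ψ : ℝ → ℝ} (hψ : ContDiff ℝ 3 ψ) (hψc : HasCompactSupport ψ) (t : ℝ) :
    HasDerivAt (fun s => ∫ x, ψ x * D (s, x))
      ((∫ x, deriv ψ x * W (t, x)) - ∫ x, iteratedDeriv 3 ψ x * Q (t, x)) t := by
  have hWt : ContDiff ℝ 1 fun x => W (t, x) := by fun_prop
  have hQt : ContDiff ℝ 3 fun x => Q (t, x) := by fun_prop
  have integrable_mul {G : ℝ → ℝ} (hG : Continuous G) : Integrable fun x => ψ x * G x :=
    (hψ.continuous.mul hG).integrable_of_hasCompactSupport hψc.mul_right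
  convert hasDerivAt_integral_mul_of_hasCompactSupport hψ.continuous hψc hD t using 1
  calc (∫ x, deriv ψ x * W (t, x)) - ∫ x, iteratedDeriv 3 ψ x * Q (t, x)
      = -(∫ x, ψ x * iteratedDeriv 1 (fun y => W (t, y)) x) +
          ∫ x, ψ x * iteratedDeriv 3 (fun y => Q (t, y)) x := by
        rw [integral_mul_iteratedDeriv_of_hasCompactSupport 1 (hψ.of_le (by norm_num)) hψc hWt,
          integral_mul_iteratedDeriv_of_hasCompactSupport 3 hψ hψc hQt, iteratedDeriv_one]
        ring
    _ = ∫ x, (-(ψ x * iteratedDeriv 1 (fun y => W (t, y)) x) +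
          ψ x * iteratedDeriv 3 (fun y => Q (t, y)) x) := by
        rw [← integral_neg]
        exact (integral_add (integrable_mul (hWt.continuous_iteratedDeriv 1 le_rfl)).neg
          (integrable_mul (hQt.continuous_iteratedDeriv 3 le_rfl))).symm
    _ = ∫ x, ψ x * ∂ₜ D (t, x) := by
        refine integral_congr_ae (.of_forall fun x => ?_)
        simp only [iteratedDeriv_spaceSlice (n := 1) hW, iteratedDeriv_spaceSlice (n := 3) hQ,
          balance, Function.iterate_succ, Function.iterate_zero, Function.comp_apply, id_eq]
        ring

theorem liminf_eq_zero_of_frequently_le {ι : Type*} {l : Filter ι} {G : ι → ℝ}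
    (hG : ∀ i, 0 ≤ G i) (h : ∀ ε > 0, ∃ᶠ i in l, G i ≤ ε) : liminf G l = 0 := by
  have bounded : IsBoundedUnder (· ≥ ·) l G := isBoundedUnder_of ⟨0, hG⟩
  have cobounded : IsCoboundedUnder (· ≥ ·) l G := .of_frequently_le (h 1 one_pos)
  refine le_antisymm (le_of_forall_pos_le_add fun ε hε => ?_)
    (le_liminf_of_le cobounded (.of_forall hG))
  rw [zero_add]
  exact liminf_le_of_frequently_le (h ε hε) bounded

/-- A balance law `∂ₜD = -∂ₓW + ∂ₓ³Q` whose flux `W` is coercive with respect to an energy density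
`e` of bounded total energy. Bounds by `O` along `⊤` are uniform in space-time. -/
structure IsCoerciveBalanceLaw (D W Q e : ℝ × ℝ → ℝ) : Prop where
  contDiff_density : ContDiff ℝ 1 D
  contDiff_flux : ContDiff ℝ 1 W
  contDiff_potential : ContDiff ℝ 3 Q
  balance : ∀ p, ∂ₜ D p = -∂ₓ W p + ∂ₓ (∂ₓ (∂ₓ Q)) p
  energy_nonneg : ∀ p, 0 ≤ e p
  coercive : ∃ c > 0, ∀ p, c * e p ≤ W p
  flux_isBigO : W =O[⊤] e
  potential_isBigO : Q =O[⊤] fun _ => (1 : ℝ)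
  density_isBigO : D =O[⊤] fun p => e p + √(e p)
  integrable_energy : ∀ t, Integrable fun x => e (t, x)
  exists_integral_energy_le : ∃ C, ∀ t, ∫ x, e (t, x) ≤ C

namespace IsCoerciveBalanceLaw

variable {D W Q e : ℝ × ℝ → ℝ}

theorem exists_nonneg_integral_energy_le (h : IsCoerciveBalanceLaw D W Q e) :
    ∃ E ≥ 0, ∀ t, ∫ x, e (t, x) ≤ E := by
  obtain ⟨E, energy_le⟩ := h.exists_integral_energy_le
  exact ⟨E, (integral_nonneg fun x => h.energy_nonneg (0, x)).trans (energy_le 0), energy_le⟩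

theorem exists_energy_le_flux_le (h : IsCoerciveBalanceLaw D W Q e) :
    ∃ c > 0, ∃ B ≥ 0, ∀ p, c * e p ≤ W p ∧ W p ≤ B * e p := by
  obtain ⟨c, hc, coercive⟩ := h.coercive
  obtain ⟨B, hB, flux_le⟩ := h.flux_isBigO.exists_nonneg
  refine ⟨c, hc, B, hB, fun p => ⟨coercive p, ?_⟩⟩
  simpa [Real.norm_of_nonneg (h.energy_nonneg p)] using
    (le_abs_self _).trans (isBigOWith_top.1 flux_le p)

theorem exists_abs_density_le (h : IsCoerciveBalanceLaw D W Q e) :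
    ∃ B ≥ 0, ∀ R ≥ 1, ∀ p, |D p| ≤ 2 * B * R * e p + B * R⁻¹ := by
  obtain ⟨B, hB, density_le⟩ := h.density_isBigO.exists_nonneg
  refine ⟨B, hB, fun R hR p => (isBigOWith_top.1 density_le p).trans ?_⟩
  have he := h.energy_nonneg p
  have young : √(e p) ≤ R * e p + R⁻¹ := by
    have : R * e p + R⁻¹ - √(e p) = R⁻¹ * ((R * √(e p) - 1 / 2) ^ 2 + 3 / 4) := by
      nth_rewrite 1 [← Real.sq_sqrt he]
      field_simp
      ring
    rw [← sub_nonneg, this]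
    positivity
  rw [Real.norm_of_nonneg (by positivity)]
  calc B * (e p + √(e p)) ≤ B * (R * e p + (R * e p + R⁻¹)) := by
        gcongr
        exact le_mul_of_one_le_left he hR
    _ = 2 * B * R * e p + B * R⁻¹ := by ring

theorem setIntegral_energy_mono (h : IsCoerciveBalanceLaw D W Q e)
    {r r' : ℝ} (hr : r ≤ r') (t : ℝ) :
    ∫ x in {x | |x| ≤ r}, e (t, x) ≤ ∫ x in {x | |x| ≤ r'}, e (t, x) :=
  setIntegral_mono_set (h.integrable_energy t).integrableOn
    (.of_forall fun x => h.energy_nonneg (t, x))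
    (LE.le.eventuallyLE fun x (hx : |x| ≤ r) => hx.trans hr)

section Virial

variable (b : ContDiffBump (0 : ℝ))

theorem exists_setIntegral_energy_le_flux (h : IsCoerciveBalanceLaw D W Q e) :
    ∃ c > 0, ∃ C ≥ 0, ∀ l m, 0 < l → l ≤ m → ∀ t,
      c * ∫ x in {x | |x| ≤ l * b.rIn}, e (t, x) ≤
        l * (∫ x, deriv (annularWeight b l m) x * W (t, x)) + C * (l / m) := by
  obtain ⟨c, hc, B, hB, bounds⟩ := h.exists_energy_le_flux_le
  obtain ⟨E, hE, energy_le⟩ := h.exists_nonneg_integral_energy_le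
  refine ⟨c, hc, B * E, by positivity, fun l m hl hlm t => ?_⟩
  have hm : 0 < m := hl.trans_le hlm
  set S := {x : ℝ | |x| ≤ l * b.rIn}
  have hS : MeasurableSet S := measurableSet_le measurable_id.abs measurable_const
  have pointwise (x : ℝ) : S.indicator (fun y => c * e (t, y)) x ≤
      l * (deriv (annularWeight b l m) x * W (t, x)) + l / m * (B * e (t, x)) :=
    indicator_le_deriv_annularWeight_mul b hl hm (mul_nonneg hc.le (h.energy_nonneg (t, x)))
      (bounds _).1 (bounds _).2 x
  have integrable_flux : Integrable fun x => l * (deriv (annularWeight b l m) x * W (t, x)) := by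
    have hW := h.contDiff_flux.continuous
    have hψ := (contDiff_annularWeight b l m).continuous_deriv (by simp)
    exact (Continuous.integrable_of_hasCompactSupport (by fun_prop)
      (hasCompactSupport_annularWeight b hl hlm).deriv.mul_right).const_mul l
  have integrable_energy (a : ℝ) : Integrable fun x => a * e (t, x) :=
    (h.integrable_energy t).const_mul a
  calc c * ∫ x in S, e (t, x) = ∫ x, S.indicator (fun y => c * e (t, y)) x := by
        rw [integral_indicator hS, integral_const_mul]
    _ ≤ ∫ x, (l * (deriv (annularWeight b l m) x * W (t, x)) + l / m * (B * e (t, x))) :=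
        integral_mono ((integrable_energy c).indicator hS)
          (integrable_flux.add ((integrable_energy B).const_mul _)) pointwise
    _ = l * (∫ x, deriv (annularWeight b l m) x * W (t, x)) + l / m * (B * ∫ x, e (t, x)) := by
        rw [integral_add integrable_flux ((integrable_energy B).const_mul _)]
        simp only [integral_const_mul]
    _ ≤ l * (∫ x, deriv (annularWeight b l m) x * W (t, x)) + l / m * (B * E) := by
        gcongr
        exact energy_le t
    _ = _ := by ring

theorem exists_abs_integral_potential_le (h : IsCoerciveBalanceLaw D W Q e) :
    ∃ C ≥ 0, ∀ l m, 0 < l → l ≤ m → ∀ t,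
      |∫ x, iteratedDeriv 3 (annularWeight b l m) x * Q (t, x)| ≤ C / l ^ 2 := by
  obtain ⟨B, hB, potential_le⟩ := h.potential_isBigO.exists_nonneg
  refine ⟨B * (2 * ∫ x, |iteratedDeriv 2 b x|), by positivity, fun l m hl hlm t => ?_⟩
  have integrable_weight : Integrable (iteratedDeriv 3 (annularWeight b l m)) :=
    ((contDiff_infty.1 (contDiff_annularWeight b l m) 3).continuous_iteratedDeriv 3
      le_rfl).integrable_of_hasCompactSupport <| by
      rw [iteratedDeriv_eq_equiv_comp]
      exact ((hasCompactSupport_annularWeight b hl hlm).iteratedFDeriv 3).comp_left (map_zero _)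
  rw [← Real.norm_eq_abs]
  calc ‖∫ x, iteratedDeriv 3 (annularWeight b l m) x * Q (t, x)‖
      ≤ ∫ x, |iteratedDeriv 3 (annularWeight b l m) x| * B := by
        refine norm_integral_le_of_norm_le (integrable_weight.abs.mul_const B)
          (.of_forall fun x => ?_)
        rw [norm_mul]
        exact mul_le_mul_of_nonneg_left (by simpa using isBigOWith_top.1 potential_le (t, x))
          (norm_nonneg _)
    _ = (∫ x, |iteratedDeriv 3 (annularWeight b l m) x|) * B := integral_mul_const _ _
    _ ≤ 2 * (∫ x, |iteratedDeriv 2 b x|) / l ^ 2 * B := by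
        gcongr
        exact integral_abs_iteratedDeriv_succ_annularWeight_le b 2 hl hlm
    _ = _ := by ring

theorem exists_abs_integral_density_le (h : IsCoerciveBalanceLaw D W Q e) :
    ∃ C ≥ 0, ∀ l m, 0 < l → l ≤ m → ∀ R ≥ 1, ∀ t,
      |∫ x, annularWeight b l m x * D (t, x)| ≤ C * (R + m / R) := by
  obtain ⟨B, hB, density_le⟩ := h.exists_abs_density_le
  obtain ⟨E, hE, energy_le⟩ := h.exists_nonneg_integral_energy_le
  have hr := b.rOut_pos
  have hN : 0 ≤ ∫ s, b s := integral_nonneg fun s => b.nonneg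
  set N := ∫ s, b s
  refine ⟨2 * N * B * (E + b.rOut), by positivity, fun l m hl hlm R hR t => ?_⟩
  have hm : 0 < m := hl.trans_le hlm
  set ψ := annularWeight b l m
  have pointwise (x : ℝ) : ‖ψ x * D (t, x)‖ ≤ N * (2 * B * R * e (t, x)) + B * R⁻¹ * |ψ x| := by
    have := h.energy_nonneg (t, x)
    exact abs_annularWeight_mul_le b l m x (by positivity) (density_le R hR _)
  have integrable_weight : Integrable fun x => B * R⁻¹ * |ψ x| :=
    ((contDiff_annularWeight b l m).continuous.integrable_of_hasCompactSupport
      (hasCompactSupport_annularWeight b hl hlm)).abs.const_mul _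
  have integrable_energy := ((h.integrable_energy t).const_mul (2 * B * R)).const_mul N
  rw [← Real.norm_eq_abs]
  calc ‖∫ x, ψ x * D (t, x)‖ ≤ ∫ x, (N * (2 * B * R * e (t, x)) + B * R⁻¹ * |ψ x|) :=
        norm_integral_le_of_norm_le (integrable_energy.add integrable_weight)
          (.of_forall pointwise)
    _ = N * (2 * B * R * ∫ x, e (t, x)) + B * R⁻¹ * ∫ x, |ψ x| := by
        rw [integral_add integrable_energy integrable_weight]
        simp only [integral_const_mul]
    _ ≤ N * (2 * B * R * E) + B * R⁻¹ * (N * (2 * (m * b.rOut))) := by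
        gcongr
        · exact energy_le t
        · exact integral_abs_annularWeight_le b hl hlm
    _ = 2 * N * B * (E * R + b.rOut * (m / R)) := by ring
    _ ≤ 2 * N * B * ((E + b.rOut) * (R + m / R)) := by
        gcongr
        have : 0 ≤ E * (m / R) + b.rOut * R := by positivity
        linarith
    _ = 2 * N * B * (E + b.rOut) * (R + m / R) := by ring

end Virial

theorem exists_time_setIntegral_energy_le (h : IsCoerciveBalanceLaw D W Q e) :
    ∃ S > 0, ∀ R ≥ 1, ∀ l, 0 < l → l ≤ R ^ 2 →
      ∃ t ∈ Set.Ioo (R ^ 3) (2 * R ^ 3),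
        ∫ x in {x | |x| ≤ l}, e (t, x) ≤ S * (l / R ^ 2 + 1 / l) := by
  let b : ContDiffBump (0 : ℝ) := ⟨1, 2, one_pos, one_lt_two⟩
  obtain ⟨c, hc, A, hA, flux_bound⟩ := h.exists_setIntegral_energy_le_flux b
  obtain ⟨B, hB, potential_bound⟩ := h.exists_abs_integral_potential_le b
  obtain ⟨C, hC, density_bound⟩ := h.exists_abs_integral_density_le b
  refine ⟨(A + B + 4 * C + 1) / c, by positivity, fun R hR l hl hlR => ?_⟩
  set ψ := annularWeight b l (R ^ 2)
  have virial := hasDerivAt_integral_mul_of_balance h.contDiff_density h.contDiff_flux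
    h.contDiff_potential h.balance (contDiff_infty.1 (contDiff_annularWeight b l (R ^ 2)) 3)
    (hasCompactSupport_annularWeight b hl hlR)
  have hR3 : R ^ 3 < 2 * R ^ 3 := by linarith [pow_pos (zero_lt_one.trans_le hR) 3]
  obtain ⟨t, ht, mean_value⟩ := exists_hasDerivAt_eq_slope _ _ hR3
    (fun s _ => (virial s).continuousAt.continuousWithinAt) fun s _ => virial s
  refine ⟨t, ht, ?_⟩
  have density_le (s : ℝ) : |∫ x, ψ x * D (s, x)| ≤ 2 * C * R :=
    (density_bound l (R ^ 2) hl hlR R hR s).trans_eq (by field_simp; ring)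
  have slope_le : (∫ x, deriv ψ x * W (t, x)) - ∫ x, iteratedDeriv 3 ψ x * Q (t, x) ≤
      4 * C / R ^ 2 := by
    rw [mean_value, div_le_div_iff₀ (by linarith) (by positivity)]
    have := abs_le.1 (density_le (2 * R ^ 3))
    have := abs_le.1 (density_le (R ^ 3))
    nlinarith [pow_pos (zero_lt_one.trans_le hR) 2]
  have flux := flux_bound l (R ^ 2) hl hlR t
  rw [show b.rIn = 1 from rfl, mul_one] at flux
  rw [div_mul_eq_mul_div, le_div_iff₀' hc]
  calc c * ∫ x in {x | |x| ≤ l}, e (t, x)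
      ≤ l * (∫ x, deriv ψ x * W (t, x)) + A * (l / R ^ 2) := flux
    _ ≤ l * (4 * C / R ^ 2 + B / l ^ 2) + A * (l / R ^ 2) := by
        gcongr
        linarith [(abs_le.1 (potential_bound l (R ^ 2) hl hlR t)).2]
    _ = (A + 4 * C) * (l / R ^ 2) + B * (1 / l) := by
        field_simp
        ring
    _ ≤ (A + B + 4 * C + 1) * (l / R ^ 2 + 1 / l) := by
        have : 0 ≤ (B + 1) * (l / R ^ 2) + (A + 4 * C + 1) * (1 / l) := by positivity
        linarith

theorem exists_eventually_setIntegral_energy_le (h : IsCoerciveBalanceLaw D W Q e)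
    {ε : ℝ} (hε : 0 < ε) :
    ∃ δ > 0, ∀ᶠ R : ℝ in atTop, ∃ t ∈ Set.Ioo (R ^ 3) (2 * R ^ 3),
      ∫ x in {x | |x| ≤ δ * R ^ 2}, e (t, x) ≤ ε := by
  obtain ⟨S, hS, decay⟩ := h.exists_time_setIntegral_energy_le
  obtain ⟨δ, ⟨hδ, hδ1⟩, hδS⟩ : ∃ δ, (0 < δ ∧ δ ≤ 1) ∧ δ * S ≤ ε / 2 := by
    refine ⟨min 1 (ε / 2 / S), ⟨by positivity, min_le_left _ _⟩, ?_⟩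
    rw [← le_div_iff₀ hS]
    exact min_le_right _ _
  have remainder : Tendsto (fun R : ℝ => S / (δ * R ^ 2)) atTop (𝓝 0) :=
    ((tendsto_pow_atTop two_ne_zero).const_mul_atTop hδ).const_div_atTop S
  refine ⟨δ, hδ, ?_⟩
  filter_upwards [eventually_ge_atTop 1, remainder.eventually_le_const (half_pos hε)]
    with R hR hRε
  obtain ⟨t, ht, energy_le⟩ := decay R hR (δ * R ^ 2) (by positivity)
    (mul_le_of_le_one_left (by positivity) hδ1)
  refine ⟨t, ht, energy_le.trans ?_⟩
  calc S * (δ * R ^ 2 / R ^ 2 + 1 / (δ * R ^ 2)) = δ * S + S / (δ * R ^ 2) := by field_simp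
    _ ≤ ε / 2 + ε / 2 := by gcongr
    _ = ε := add_halves ε

theorem frequently_setIntegral_energy_le (h : IsCoerciveBalanceLaw D W Q e)
    {ρ : ℝ → ℝ} (hρ : ρ =o[atTop] fun t => t ^ (2 / 3 : ℝ))
    {ε : ℝ} (hε : 0 < ε) : ∃ᶠ t in atTop, ∫ x in {x | |x| ≤ ρ t}, e (t, x) ≤ ε := by
  obtain ⟨δ, hδ, decay⟩ := h.exists_eventually_setIntegral_energy_le hε
  obtain ⟨T, hT⟩ := eventually_atTop.1 (hρ.def (c := δ / 4) (by positivity))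
  refine frequently_atTop.2 fun T' => ?_
  obtain ⟨R, ⟨t, ⟨hRt, htR⟩, energy_le⟩, hR, hRT, hRT'⟩ :=
    (decay.and ((eventually_ge_atTop 1).and
      ((eventually_ge_atTop T).and (eventually_ge_atTop T')))).exists
  have hR3 : R ≤ R ^ 3 := le_self_pow₀ hR three_ne_zero
  have ht : 0 ≤ t := by linarith
  have radius_le : ρ t ≤ δ * R ^ 2 := by
    calc ρ t ≤ δ / 4 * t ^ (2 / 3 : ℝ) := by
          have := (le_abs_self _).trans (hT t (by linarith))
          rwa [Real.norm_of_nonneg (by positivity)] at this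
      _ ≤ δ / 4 * ((2 * R) ^ 3) ^ (2 / 3 : ℝ) := by
          gcongr
          nlinarith
      _ = δ * R ^ 2 := by
          rw [← Real.rpow_natCast, ← Real.rpow_mul (by positivity)]
          norm_num
          ring
  exact ⟨t, by linarith, (h.setIntegral_energy_mono radius_le t).trans energy_le⟩

theorem liminf_setIntegral_eq_zero (h : IsCoerciveBalanceLaw D W Q e)
    {ρ : ℝ → ℝ} (hρ : ρ =o[atTop] fun t => t ^ (2 / 3 : ℝ))
    {F : ℝ × ℝ → ℝ} (hF : ∀ p, 0 ≤ F p) (hFe : F =O[⊤] e) :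
    liminf (fun t => ∫ x in {x | |x| ≤ ρ t}, F (t, x)) atTop = 0 := by
  obtain ⟨B, hB, F_le⟩ := hFe.exists_pos
  refine liminf_eq_zero_of_frequently_le (fun t => integral_nonneg fun x => hF (t, x))
    fun ε hε => (h.frequently_setIntegral_energy_le hρ (div_pos hε hB)).mono fun t ht => ?_
  calc ∫ x in {x | |x| ≤ ρ t}, F (t, x) ≤ ∫ x in {x | |x| ≤ ρ t}, B * e (t, x) := by
        refine integral_mono_of_nonneg (.of_forall fun x => hF (t, x))
          ((h.integrable_energy t).const_mul B).integrableOn (.of_forall fun x => ?_)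
        simpa [Real.norm_of_nonneg (hF (t, x)), Real.norm_of_nonneg (h.energy_nonneg (t, x))]
          using isBigOWith_top.1 F_le (t, x)
    _ = B * ∫ x in {x | |x| ≤ ρ t}, e (t, x) := integral_const_mul _ _
    _ ≤ ε := (le_div_iff₀' hB).1 ht

end IsCoerciveBalanceLaw

section Sobolev

theorem sq_le_integral_sq_add_deriv_sq {G : ℝ → ℝ} (hG : ContDiff ℝ 1 G)
    (hint : Integrable fun y => G y ^ 2 + deriv G y ^ 2) (x : ℝ) :
    G x ^ 2 ≤ ∫ y, (G y ^ 2 + deriv G y ^ 2) := by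
  have := hG.continuous
  have := hG.continuous_deriv le_rfl
  have deriv_sq (y : ℝ) : HasDerivAt (fun y => G y ^ 2) (2 * G y * deriv G y) y := by
    simpa using (hG.differentiable one_ne_zero y).hasDerivAt.fun_pow 2
  have integrable_sq : Integrable fun y => G y ^ 2 :=
    hint.mono' (by fun_prop) (.of_forall fun y => by
      rw [Real.norm_of_nonneg (sq_nonneg _)]
      exact le_add_of_nonneg_right (sq_nonneg _))
  have integrable_deriv_sq : Integrable fun y => 2 * G y * deriv G y :=
    hint.mono' (by fun_prop) (.of_forall fun y => by
      rw [Real.norm_eq_abs, abs_mul, abs_mul, abs_two, ← sq_abs (G y), ← sq_abs (deriv G y)]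
      exact two_mul_le_add_sq _ _)
  have tendsto_sq : Tendsto (fun y => G y ^ 2) atBot (𝓝 0) :=
    tendsto_zero_of_hasDerivAt_of_integrableOn_Iic (a := 0) (fun y _ => deriv_sq y)
      integrable_deriv_sq.integrableOn integrable_sq.integrableOn
  calc G x ^ 2 = ∫ y in Set.Iic x, 2 * G y * deriv G y := by
        rw [integral_Iic_of_hasDerivAt_of_tendsto' (fun y _ => deriv_sq y)
          integrable_deriv_sq.integrableOn tendsto_sq, sub_zero]
    _ ≤ ∫ y in Set.Iic x, (G y ^ 2 + deriv G y ^ 2) :=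
        setIntegral_mono integrable_deriv_sq.integrableOn hint.integrableOn
          fun y => two_mul_le_add_sq _ _
    _ ≤ ∫ y, (G y ^ 2 + deriv G y ^ 2) :=
        setIntegral_le_integral hint (.of_forall fun y => by positivity)

theorem sq_le_of_integral_le {F e : ℝ × ℝ → ℝ} {E : ℝ} (hF : ContDiff ℝ 1 F)
    (hFe : ∀ p, F p ^ 2 + ∂ₓ F p ^ 2 ≤ e p) (he : ∀ t, Integrable fun x => e (t, x))
    (hE : ∀ t, ∫ x, e (t, x) ≤ E) (p : ℝ × ℝ) : F p ^ 2 ≤ E := by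
  obtain ⟨t, x⟩ := p
  have hFt : ContDiff ℝ 1 fun y => F (t, y) := by fun_prop
  have := hFt.continuous_deriv le_rfl
  have deriv_slice (y : ℝ) : deriv (fun y => F (t, y)) y = ∂ₓ F (t, y) :=
    (hasDerivAt_spaceSlice (hF.differentiable one_ne_zero) t y).deriv
  have hint : Integrable fun y => F (t, y) ^ 2 + deriv (fun y => F (t, y)) y ^ 2 :=
    (he t).mono' (Continuous.aestronglyMeasurable (by fun_prop)) (.of_forall fun y => by
      rw [Real.norm_of_nonneg (by positivity), deriv_slice]
      exact hFe (t, y))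
  refine (sq_le_integral_sq_add_deriv_sq hFt hint x).trans (le_trans ?_ (hE t))
  exact integral_mono hint (he t) fun y => by simpa only [deriv_slice] using hFe (t, y)

end Sobolev

section ModifiedMomentum

variable (α β γ L : ℝ) (f g v : ℝ × ℝ → ℝ)

/-- The `H¹` energy density `|u|² + |∂ₓu|² + v² + (∂ₓv)²` of `(u, v)`, where `u = f + i g`. -/
noncomputable def h1Density (p : ℝ × ℝ) : ℝ :=
  f p ^ 2 + g p ^ 2 + (∂ₓ f p ^ 2 + ∂ₓ g p ^ 2) + v p ^ 2 + ∂ₓ v p ^ 2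

/-- The density `(α/2) v² - γ Im (ū ∂ₓu) + L v` of the conserved momentum of the system plus `L`
times the conserved mass `∫ v`, where `u = f + i g`. -/
noncomputable def momentumDensity (p : ℝ × ℝ) : ℝ :=
  α / 2 * v p ^ 2 - γ * (f p * ∂ₓ g p - g p * ∂ₓ f p) + L * v p

/-- The part of the flux of `momentumDensity` that is not a second `x`-derivative. -/
noncomputable def momentumFlux (p : ℝ × ℝ) : ℝ :=
  -(3 * α / 2) * ∂ₓ v p ^ 2 - 2 * γ * (∂ₓ f p ^ 2 + ∂ₓ g p ^ 2) +
    (α / 3 * v p + L / 2) * v p ^ 2 -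
    γ * (α * v p + β / 2 * (f p ^ 2 + g p ^ 2) + L) * (f p ^ 2 + g p ^ 2)

/-- The function whose second `x`-derivative is the dispersive part of the flux of
`momentumDensity`, with the sign for which `∂ₜD = -∂ₓW + ∂ₓ³Q`. -/
noncomputable def momentumPotential (p : ℝ × ℝ) : ℝ :=
  -(α / 2) * v p ^ 2 - γ / 2 * (f p ^ 2 + g p ^ 2) - L * v p

/-- A smooth solution `(f + i g, v)` of the Schrödinger–Korteweg–de Vries system, written for the
real functions `f`, `g`, `v` of `p = (t, x)`, whose `H¹` energy is bounded in time. -/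
structure IsBoundedEnergySolution : Prop where
  contDiff_re : ContDiff ℝ ∞ f
  contDiff_im : ContDiff ℝ ∞ g
  contDiff_kdv : ContDiff ℝ ∞ v
  dt_re : ∀ p, ∂ₜ f p = -∂ₓ (∂ₓ g) p + (α * v p + β * (f p ^ 2 + g p ^ 2)) * g p
  dt_im : ∀ p, ∂ₜ g p = ∂ₓ (∂ₓ f) p - (α * v p + β * (f p ^ 2 + g p ^ 2)) * f p
  dt_kdv : ∀ p, ∂ₜ v p =
    -∂ₓ (∂ₓ (∂ₓ v)) p - v p * ∂ₓ v p + γ * (2 * (f p * ∂ₓ f p + g p * ∂ₓ g p))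
  integrable_h1Density : ∀ t, Integrable fun x => h1Density f g v (t, x)
  exists_integral_h1Density_le : ∃ E, ∀ t, ∫ x, h1Density f g v (t, x) ≤ E

theorem sq_le_h1Density (p : ℝ × ℝ) :
    f p ^ 2 + g p ^ 2 ≤ h1Density f g v p ∧ ∂ₓ f p ^ 2 + ∂ₓ g p ^ 2 ≤ h1Density f g v p ∧
      v p ^ 2 ≤ h1Density f g v p ∧ ∂ₓ v p ^ 2 ≤ h1Density f g v p := by
  simp only [h1Density]
  refine ⟨?_, ?_, ?_, ?_⟩ <;>
    linarith [sq_nonneg (f p), sq_nonneg (g p), sq_nonneg (∂ₓ f p), sq_nonneg (∂ₓ g p),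
      sq_nonneg (v p), sq_nonneg (∂ₓ v p)]

theorem h1Density_nonneg (p : ℝ × ℝ) : 0 ≤ h1Density f g v p := by
  unfold h1Density
  positivity

end ModifiedMomentum

section Coercivity

variable {α β γ M : ℝ} {f g v : ℝ × ℝ → ℝ}

theorem mul_h1Density_le_momentumFlux {c L : ℝ} {p : ℝ × ℝ} (hcα : c ≤ -(3 * α / 2))
    (hcγ : c ≤ -(2 * γ)) (kdv_coeff : c ≤ α / 3 * v p + L / 2)
    (schrodinger_coeff : c ≤ -γ * (α * v p + β / 2 * (f p ^ 2 + g p ^ 2) + L)) :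
    c * h1Density f g v p ≤ momentumFlux α β γ L f g v p := by
  calc c * h1Density f g v p
      = c * ∂ₓ v p ^ 2 + c * (∂ₓ f p ^ 2 + ∂ₓ g p ^ 2) + c * v p ^ 2 +
          c * (f p ^ 2 + g p ^ 2) := by
        rw [h1Density]
        ring
    _ ≤ -(3 * α / 2) * ∂ₓ v p ^ 2 + -(2 * γ) * (∂ₓ f p ^ 2 + ∂ₓ g p ^ 2) +
          (α / 3 * v p + L / 2) * v p ^ 2 +
          -γ * (α * v p + β / 2 * (f p ^ 2 + g p ^ 2) + L) * (f p ^ 2 + g p ^ 2) := by gcongr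
    _ = momentumFlux α β γ L f g v p := by
        rw [momentumFlux]
        ring

theorem exists_coercive_momentumFlux (hα : α < 0) (hγ : γ < 0) (hv : ∀ p, |v p| ≤ M)
    (hu : ∀ p, f p ^ 2 + g p ^ 2 ≤ M) :
    ∃ L, ∃ c > 0, ∀ p, c * h1Density f g v p ≤ momentumFlux α β γ L f g v p := by
  have hM : 0 ≤ M := (abs_nonneg _).trans (hv 0)
  refine ⟨(|α| + |β|) * M + 2 + 1 / -γ, min (-(3 * α / 2)) (min (-(2 * γ)) 1), ?_, fun p => ?_⟩
  · simp only [lt_min_iff]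
    exact ⟨by linarith, by linarith, one_pos⟩
  set L := (|α| + |β|) * M + 2 + 1 / -γ with hL
  set c := min (-(3 * α / 2)) (min (-(2 * γ)) 1)
  have hcα : c ≤ -(3 * α / 2) := min_le_left _ _
  have hcγ : c ≤ -(2 * γ) := (min_le_right _ _).trans (min_le_left _ _)
  have hc1 : c ≤ 1 := (min_le_right _ _).trans (min_le_right _ _)
  have hγ' : 0 < 1 / -γ := by simpa using hγ
  have hβM : 0 ≤ |β| * M := by positivity
  have hαM : 0 ≤ |α| * M := by positivity
  have αv_le : |α * v p| ≤ |α| * M := by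
    rw [abs_mul]
    gcongr
    exact hv p
  have βu_le : |β * (f p ^ 2 + g p ^ 2)| ≤ |β| * M := by
    rw [abs_mul, abs_of_nonneg (a := f p ^ 2 + g p ^ 2) (by positivity)]
    gcongr
    exact hu p
  have kdv_coeff : c ≤ α / 3 * v p + L / 2 := by linarith [(abs_le.1 αv_le).1]
  have schrodinger_coeff : c ≤ -γ * (α * v p + β / 2 * (f p ^ 2 + g p ^ 2) + L) := by
    calc c ≤ -γ * (1 / -γ) := by rwa [mul_one_div_cancel (by linarith)]
      _ ≤ -γ * (α * v p + β / 2 * (f p ^ 2 + g p ^ 2) + L) := by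
          gcongr
          · linarith
          · linarith [(abs_le.1 αv_le).1, (abs_le.1 βu_le).1]
  exact mul_h1Density_le_momentumFlux hcα hcγ kdv_coeff schrodinger_coeff

theorem momentumFlux_isBigO (hv : v =O[⊤] fun _ => (1 : ℝ))
    (hu : (fun p => f p ^ 2 + g p ^ 2) =O[⊤] fun _ => (1 : ℝ)) (L : ℝ) :
    momentumFlux α β γ L f g v =O[⊤] h1Density f g v := by
  have le_energy {F : ℝ × ℝ → ℝ} (hF0 : ∀ p, 0 ≤ F p) (hF : ∀ p, F p ≤ h1Density f g v p) :
      F =O[⊤] h1Density f g v :=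
    .of_norm_le fun p => by simpa [Real.norm_of_nonneg (hF0 p)] using hF p
  have mul_energy {a F : ℝ × ℝ → ℝ} (ha : a =O[⊤] fun _ => (1 : ℝ))
      (hF : F =O[⊤] h1Density f g v) : (fun p => a p * F p) =O[⊤] h1Density f g v := by
    simpa using ha.mul hF
  have hconst (a : ℝ) : (fun _ : ℝ × ℝ => a) =O[⊤] fun _ => (1 : ℝ) :=
    isBigO_const_const a one_ne_zero ⊤
  have vx_sq := le_energy (fun p => sq_nonneg (∂ₓ v p)) fun p => (sq_le_h1Density f g v p).2.2.2
  have ux_sq := le_energy (fun p => by positivity) fun p => (sq_le_h1Density f g v p).2.1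
  have v_sq := le_energy (fun p => sq_nonneg (v p)) fun p => (sq_le_h1Density f g v p).2.2.1
  have u_sq := le_energy (fun p => by positivity) fun p => (sq_le_h1Density f g v p).1
  have v_coeff := (hv.const_mul_left (α / 3)).add (hconst (L / 2))
  have u_coeff :=
    (((hv.const_mul_left α).add (hu.const_mul_left (β / 2))).add (hconst L)).const_mul_left γ
  exact (((vx_sq.const_mul_left _).sub (ux_sq.const_mul_left _)).add
    (mul_energy v_coeff v_sq)).sub (mul_energy u_coeff u_sq)

theorem momentumPotential_isBigO (hv : v =O[⊤] fun _ => (1 : ℝ))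
    (hu : (fun p => f p ^ 2 + g p ^ 2) =O[⊤] fun _ => (1 : ℝ)) (L : ℝ) :
    momentumPotential α γ L f g v =O[⊤] fun _ => (1 : ℝ) := by
  have hv2 : (fun p => v p ^ 2) =O[⊤] fun _ => (1 : ℝ) := by simpa using hv.pow 2
  exact ((hv2.const_mul_left _).sub (hu.const_mul_left _)).sub (hv.const_mul_left _)

theorem momentumDensity_isBigO (α γ L : ℝ) :
    momentumDensity α γ L f g v =O[⊤] fun p => h1Density f g v p + √(h1Density f g v p) := by
  have le_energy {F : ℝ × ℝ → ℝ} (hF : ∀ p, |F p| ≤ h1Density f g v p) :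
      F =O[⊤] fun p => h1Density f g v p + √(h1Density f g v p) :=
    .of_norm_le fun p => by
      have := (abs_nonneg _).trans (hF p)
      exact (hF p).trans (le_add_of_nonneg_right (Real.sqrt_nonneg _))
  have v_sq := le_energy (F := fun p => v p ^ 2) fun p => by
    simpa using (sq_le_h1Density f g v p).2.2.1
  have current := le_energy (F := fun p => f p * ∂ₓ g p - g p * ∂ₓ f p) fun p => by
    rw [abs_le, h1Density]
    constructor <;> nlinarith [sq_nonneg (f p + ∂ₓ g p), sq_nonneg (f p - ∂ₓ g p),
      sq_nonneg (g p + ∂ₓ f p), sq_nonneg (g p - ∂ₓ f p), sq_nonneg (v p), sq_nonneg (∂ₓ v p)]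
  have v_linear : v =O[⊤] fun p => h1Density f g v p + √(h1Density f g v p) :=
    .of_norm_le fun p => by
      have hv := (sq_le_h1Density f g v p).2.2.1
      have := (sq_nonneg _).trans hv
      exact (Real.abs_le_sqrt hv).trans (le_add_of_nonneg_left this)
  exact ((v_sq.const_mul_left _).sub (current.const_mul_left _)).add (v_linear.const_mul_left _)

end Coercivity

namespace IsBoundedEnergySolution

variable {α β γ : ℝ} {f g v : ℝ × ℝ → ℝ}

theorem momentum_balance (h : IsBoundedEnergySolution α β γ f g v) (L : ℝ) (p : ℝ × ℝ) :
    ∂ₜ (momentumDensity α γ L f g v) p = -∂ₓ (momentumFlux α β γ L f g v) p +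
      ∂ₓ (∂ₓ (∂ₓ (momentumPotential α γ L f g v))) p := by
  have differentiable_dx {F : ℝ × ℝ → ℝ} (hF : ContDiff ℝ ∞ F) :
      Differentiable ℝ F ∧ Differentiable ℝ (∂ₓ F) ∧ Differentiable ℝ (∂ₓ (∂ₓ F)) := by
    have hF1 : ContDiff ℝ ∞ (∂ₓ F) := contDiff_dirDeriv hF (by simp) _
    have hF2 : ContDiff ℝ ∞ (∂ₓ (∂ₓ F)) := contDiff_dirDeriv hF1 (by simp) _
    exact ⟨hF.differentiable (by simp), hF1.differentiable (by simp), hF2.differentiable (by simp)⟩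
  obtain ⟨hf0, hf1, hf2⟩ := differentiable_dx h.contDiff_re
  obtain ⟨hg0, hg1, hg2⟩ := differentiable_dx h.contDiff_im
  obtain ⟨hv0, hv1, hv2⟩ := differentiable_dx h.contDiff_kdv
  have dt_dx {F : ℝ × ℝ → ℝ} (hF : ContDiff ℝ ∞ F) : ∂ₜ (∂ₓ F) = ∂ₓ (∂ₜ F) :=
    dirDeriv_comm (contDiff_infty.1 hF 2) _ _
  unfold momentumDensity momentumFlux momentumPotential
  simp (disch := fun_prop) only [pow_succ, pow_zero, one_mul, dirDeriv_add, dirDeriv_sub,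
    dirDeriv_mul, dirDeriv_const, dt_dx h.contDiff_re, dt_dx h.contDiff_im, funext h.dt_re,
    funext h.dt_im, h.dt_kdv, dirDeriv_neg]
  ring

theorem exists_amplitude_le (h : IsBoundedEnergySolution α β γ f g v) :
    ∃ M, (∀ p, |v p| ≤ M) ∧ ∀ p, f p ^ 2 + g p ^ 2 ≤ M := by
  obtain ⟨E, hE⟩ := h.exists_integral_h1Density_le
  have sq_le {F : ℝ × ℝ → ℝ} (hF : ContDiff ℝ ∞ F)
      (hFe : ∀ p, F p ^ 2 + ∂ₓ F p ^ 2 ≤ h1Density f g v p) (p : ℝ × ℝ) : F p ^ 2 ≤ E :=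
    sq_le_of_integral_le (contDiff_infty.1 hF 1) hFe h.integrable_h1Density hE p
  have hf := sq_le h.contDiff_re fun p => by
    unfold h1Density
    linarith [sq_nonneg (g p), sq_nonneg (∂ₓ g p), sq_nonneg (v p), sq_nonneg (∂ₓ v p)]
  have hg := sq_le h.contDiff_im fun p => by
    unfold h1Density
    linarith [sq_nonneg (f p), sq_nonneg (∂ₓ f p), sq_nonneg (v p), sq_nonneg (∂ₓ v p)]
  have hv := sq_le h.contDiff_kdv fun p => by
    unfold h1Density
    linarith [sq_nonneg (f p), sq_nonneg (g p), sq_nonneg (∂ₓ f p), sq_nonneg (∂ₓ g p)]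
  exact ⟨max √E (2 * E), fun p => (Real.abs_le_sqrt (hv p)).trans (le_max_left _ _),
    fun p => le_max_of_le_right (by linarith [hf p, hg p])⟩

theorem exists_isCoerciveBalanceLaw (h : IsBoundedEnergySolution α β γ f g v)
    (hα : α < 0) (hγ : γ < 0) :
    ∃ D W Q, IsCoerciveBalanceLaw D W Q (h1Density f g v) := by
  obtain ⟨M, hv, hu⟩ := h.exists_amplitude_le
  obtain ⟨L, coercive⟩ := exists_coercive_momentumFlux (β := β) hα hγ hv hu
  have v_isBigO : v =O[⊤] fun _ => (1 : ℝ) := .of_bound M (.of_forall (by simpa using hv))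
  have u_isBigO : (fun p => f p ^ 2 + g p ^ 2) =O[⊤] fun _ => (1 : ℝ) :=
    .of_bound M (.of_forall fun p => by
      simpa [Real.norm_of_nonneg (add_nonneg (sq_nonneg (f p)) (sq_nonneg (g p)))] using hu p)
  have contDiff_dx {F : ℝ × ℝ → ℝ} (hF : ContDiff ℝ ∞ F) :
      ContDiff ℝ 1 F ∧ ContDiff ℝ 3 F ∧ ContDiff ℝ 1 (∂ₓ F) :=
    ⟨contDiff_infty.1 hF 1, contDiff_infty.1 hF 3,
      contDiff_infty.1 (contDiff_dirDeriv hF (by simp) _) 1⟩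
  obtain ⟨hf1, hf3, hfx⟩ := contDiff_dx h.contDiff_re
  obtain ⟨hg1, hg3, hgx⟩ := contDiff_dx h.contDiff_im
  obtain ⟨hv1, hv3, hvx⟩ := contDiff_dx h.contDiff_kdv
  exact ⟨momentumDensity α γ L f g v, momentumFlux α β γ L f g v, momentumPotential α γ L f g v,
    { contDiff_density := by unfold momentumDensity; fun_prop
      contDiff_flux := by unfold momentumFlux; fun_prop
      contDiff_potential := by unfold momentumPotential; fun_prop
      balance := h.momentum_balance L
      energy_nonneg := h1Density_nonneg f g v
      coercive := coercive
      flux_isBigO := momentumFlux_isBigO v_isBigO u_isBigO L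
      potential_isBigO := momentumPotential_isBigO v_isBigO u_isBigO L
      density_isBigO := momentumDensity_isBigO α γ L
      integrable_energy := h.integrable_h1Density
      exists_integral_energy_le := h.exists_integral_h1Density_le }⟩

end IsBoundedEnergySolution

section ComplexComponents

theorem integrable_norm_sq_of_schwartzMap {E : Type*} [NormedAddCommGroup E] [NormedSpace ℝ E]
    (φ : SchwartzMap ℝ E) : Integrable fun x => ‖φ x‖ ^ 2 := by
  simpa using (φ.memLp 2 volume).integrable_norm_pow two_ne_zero

theorem integrable_norm_deriv_sq_of_schwartzMap {E : Type*} [NormedAddCommGroup E]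
    [NormedSpace ℝ E] (φ : SchwartzMap ℝ E) : Integrable fun x => ‖deriv φ x‖ ^ 2 :=
  integrable_norm_sq_of_schwartzMap (SchwartzMap.derivCLM ℝ E φ)

theorem sq_norm_eq_re_sq_add_im_sq (z : ℂ) : ‖z‖ ^ 2 = z.re ^ 2 + z.im ^ 2 := by
  rw [Complex.sq_norm, Complex.normSq_apply, sq, sq]

theorem schrodinger_re_im {z zt zxx : ℂ} {α β w : ℝ}
    (h : Complex.I * zt + zxx = α * z * w + β * z * (‖z‖ : ℂ) ^ 2) :
    zt.re = -zxx.im + (α * w + β * (z.re ^ 2 + z.im ^ 2)) * z.im ∧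
      zt.im = zxx.re - (α * w + β * (z.re ^ 2 + z.im ^ 2)) * z.re := by
  rw [← Complex.ofReal_pow, sq_norm_eq_re_sq_add_im_sq] at h
  have hre := congrArg Complex.re h
  have him := congrArg Complex.im h
  simp only [Complex.add_re, Complex.add_im, Complex.mul_re, Complex.mul_im,
    Complex.I_re, Complex.I_im, Complex.ofReal_re, Complex.ofReal_im] at hre him
  constructor <;> linarith

variable {U : ℝ × ℝ → ℂ}

theorem dirDeriv_re (hU : Differentiable ℝ U) (w : ℝ × ℝ) :
    dirDeriv w (fun p => (U p).re) = fun p => (dirDeriv w U p).re :=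
  funext fun p => dirDeriv_clm_comp Complex.reCLM hU w p

theorem dirDeriv_im (hU : Differentiable ℝ U) (w : ℝ × ℝ) :
    dirDeriv w (fun p => (U p).im) = fun p => (dirDeriv w U p).im :=
  funext fun p => dirDeriv_clm_comp Complex.imCLM hU w p

theorem h1Density_re_im (hU : Differentiable ℝ U) (w : ℝ × ℝ → ℝ) (p : ℝ × ℝ) :
    h1Density (fun p => (U p).re) (fun p => (U p).im) w p =
      ‖U p‖ ^ 2 + ‖∂ₓ U p‖ ^ 2 + w p ^ 2 + ∂ₓ w p ^ 2 := by
  simp only [h1Density, dirDeriv_re hU, dirDeriv_im hU, sq_norm_eq_re_sq_add_im_sq]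

theorem deriv_norm_sq_spaceSlice (hU : Differentiable ℝ U) (t x : ℝ) :
    deriv (fun y => ‖U (t, y)‖ ^ 2) x =
      2 * ((U (t, x)).re * (∂ₓ U (t, x)).re + (U (t, x)).im * (∂ₓ U (t, x)).im) := by
  rw [(hasDerivAt_spaceSlice hU t x).norm_sq.deriv]
  simp only [Complex.inner, Complex.mul_re, Complex.conj_re, Complex.conj_im, mul_neg,
    sub_neg_eq_add, mul_eq_mul_left_iff, OfNat.ofNat_ne_zero, or_false]
  ring

end ComplexComponents

section SolutionsOfTheSystem

variable {α β γ : ℝ} {u : ℝ → ℝ → ℂ} {v : ℝ → ℝ → ℝ}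

theorem _root_.IsSKdVSolution.h1Density_eq (hsol : IsSKdVSolution α β γ u v) (t x : ℝ) :
    h1Density (fun p => (u p.1 p.2).re) (fun p => (u p.1 p.2).im) (fun p => v p.1 p.2) (t, x) =
      ‖u t x‖ ^ 2 + ‖deriv (u t) x‖ ^ 2 + v t x ^ 2 + deriv (v t) x ^ 2 := by
  obtain ⟨hu, hv, -⟩ := hsol
  have hu := hu.differentiable (by simp)
  rw [h1Density_re_im hu, ← (hasDerivAt_spaceSlice hu t x).deriv,
    ← (hasDerivAt_spaceSlice (hv.differentiable (by simp)) t x).deriv]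

theorem _root_.IsSKdVSolution.integrable_sq (hsol : IsSKdVSolution α β γ u v) (t : ℝ) :
    Integrable (fun x => ‖u t x‖ ^ 2) ∧ Integrable (fun x => ‖deriv (u t) x‖ ^ 2) ∧
      Integrable (fun x => v t x ^ 2) ∧ Integrable (fun x => deriv (v t) x ^ 2) := by
  obtain ⟨-, -, hu, hv, -⟩ := hsol
  obtain ⟨φ, hφ⟩ := hu t
  obtain ⟨χ, hχ⟩ := hv t
  rw [← funext hφ, ← funext hχ]
  exact ⟨integrable_norm_sq_of_schwartzMap φ, integrable_norm_deriv_sq_of_schwartzMap φ,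
    by simpa using integrable_norm_sq_of_schwartzMap χ,
    by simpa using integrable_norm_deriv_sq_of_schwartzMap χ⟩

theorem _root_.IsSKdVSolution.integrable_h1Density (hsol : IsSKdVSolution α β γ u v) (t : ℝ) :
    Integrable fun x => h1Density (fun p => (u p.1 p.2).re) (fun p => (u p.1 p.2).im)
      (fun p => v p.1 p.2) (t, x) := by
  obtain ⟨I1, I2, I3, I4⟩ := hsol.integrable_sq t
  simp only [hsol.h1Density_eq]
  fun_prop

theorem _root_.IsSKdVSolution.integral_h1Density (hsol : IsSKdVSolution α β γ u v) (t : ℝ) :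
    ∫ x, h1Density (fun p => (u p.1 p.2).re) (fun p => (u p.1 p.2).im)
      (fun p => v p.1 p.2) (t, x) =
      (∫ x, ‖u t x‖ ^ 2) + (∫ x, ‖deriv (u t) x‖ ^ 2) + (∫ x, v t x ^ 2) +
        ∫ x, deriv (v t) x ^ 2 := by
  obtain ⟨I1, I2, I3, I4⟩ := hsol.integrable_sq t
  simp only [hsol.h1Density_eq]
  rw [integral_add (by fun_prop) I4, integral_add (by fun_prop) I3, integral_add I1 I2]

theorem _root_.IsSKdVSolution.isBoundedEnergySolution (hsol : IsSKdVSolution α β γ u v) :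
    IsBoundedEnergySolution α β γ (fun p => (u p.1 p.2).re) (fun p => (u p.1 p.2).im)
      fun p => v p.1 p.2 := by
  have ⟨hu, hv, _, _, schrodinger, kdv, C, hC⟩ := hsol
  have hu1 := hu.differentiable (by simp)
  have hux : Differentiable ℝ (∂ₓ fun p : ℝ × ℝ => u p.1 p.2) :=
    (contDiff_dirDeriv (m := ∞) hu (by simp) _).differentiable (by simp)
  have components (t x : ℝ) := by
    have h := schrodinger t x
    rw [(hasDerivAt_timeSlice hu1 t x).deriv,
      iteratedDeriv_spaceSlice (contDiff_infty.1 hu 2) t] at h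
    exact schrodinger_re_im h
  exact {
    contDiff_re := Complex.reCLM.contDiff.comp hu
    contDiff_im := Complex.imCLM.contDiff.comp hu
    contDiff_kdv := hv
    dt_re := fun p => by
      rw [dirDeriv_re hu1, dirDeriv_im hu1, dirDeriv_im hux]
      exact (components p.1 p.2).1
    dt_im := fun p => by
      rw [dirDeriv_im hu1, dirDeriv_re hu1, dirDeriv_re hux]
      exact (components p.1 p.2).2
    dt_kdv := fun ⟨t, x⟩ => by
      have h := kdv t x
      rw [(hasDerivAt_timeSlice (hv.differentiable (by simp)) t x).deriv,
        (hasDerivAt_spaceSlice (hv.differentiable (by simp)) t x).deriv,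
        iteratedDeriv_spaceSlice (contDiff_infty.1 hv 3) t,
        deriv_norm_sq_spaceSlice hu1] at h
      rw [dirDeriv_re hu1, dirDeriv_im hu1]
      dsimp only [Function.iterate_succ, Function.iterate_zero, Function.comp_apply, id_eq] at h ⊢
      linarith
    integrable_h1Density := hsol.integrable_h1Density
    exists_integral_h1Density_le := ⟨C, fun t => (hsol.integral_h1Density t).trans_le (hC t)⟩ }

end SolutionsOfTheSystem

theorem isLittleO_const_mul_rpow_rpow_atTop (K : ℝ) {p q : ℝ} (hpq : p < q) :
    (fun t : ℝ => K * t ^ p) =o[atTop] fun t => t ^ q := by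
  have quotient_tendsto : Tendsto (fun t : ℝ => t ^ p / t ^ q) atTop (𝓝 0) := by
    refine (tendsto_rpow_neg_atTop (sub_pos.2 hpq)).congr' ?_
    filter_upwards [eventually_gt_atTop 0] with t ht
    rw [neg_sub, Real.rpow_sub ht]
  refine (isLittleO_of_tendsto' ?_ quotient_tendsto).const_mul_left K
  filter_upwards [eventually_gt_atTop 0] with t ht h
  exact absurd h (Real.rpow_pos_of_pos ht q).ne'

end SKdV

open SKdV Asymptotics

theorem skdv_H1_decay_beta_pos_general {α β γ : ℝ} (hα : α < 0) (hγ : γ < 0)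
    {u : ℝ → ℝ → ℂ} {v : ℝ → ℝ → ℝ} (hsol : IsSKdVSolution α β γ u v)
    {ρ : ℝ → ℝ} (hρ : ρ =o[atTop] fun t => t ^ (2 / 3 : ℝ)) :
    liminf (fun t : ℝ =>
        ∫ x in {x : ℝ | |x| ≤ ρ t}, ((deriv (v t) x) ^ 2 + ‖deriv (u t) x‖ ^ 2)) atTop = 0 ∧
    liminf (fun t : ℝ => ∫ x in {x : ℝ | |x| ≤ ρ t}, ‖u t x‖ ^ 4) atTop = 0 := by
  have hsol' := hsol.isBoundedEnergySolution
  obtain ⟨D, W, Q, law⟩ := hsol'.exists_isCoerciveBalanceLaw hα hγ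
  obtain ⟨M, -, amplitude_le⟩ := hsol'.exists_amplitude_le
  simp only [← sq_norm_eq_re_sq_add_im_sq] at amplitude_le
  constructor
  · refine law.liminf_setIntegral_eq_zero (F := fun p => deriv (v p.1) p.2 ^ 2 +
      ‖deriv (u p.1) p.2‖ ^ 2) hρ (fun p => by positivity) (.of_bound 1 (.of_forall fun p => ?_))
    rw [hsol.h1Density_eq, one_mul, Real.norm_of_nonneg (by positivity),
      Real.norm_of_nonneg (by positivity)]
    linarith [sq_nonneg ‖u p.1 p.2‖, sq_nonneg (v p.1 p.2)]
  · refine law.liminf_setIntegral_eq_zero (F := fun p => ‖u p.1 p.2‖ ^ 4) hρ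
      (fun p => by positivity) (.of_bound M (.of_forall fun p => ?_))
    rw [hsol.h1Density_eq, Real.norm_of_nonneg (by positivity),
      Real.norm_of_nonneg (by positivity)]
    calc ‖u p.1 p.2‖ ^ 4 = ‖u p.1 p.2‖ ^ 2 * ‖u p.1 p.2‖ ^ 2 := by ring
      _ ≤ _ := mul_le_mul (amplitude_le p) (by
        linarith [sq_nonneg ‖deriv (u p.1) p.2‖, sq_nonneg (v p.1 p.2),
          sq_nonneg (deriv (v p.1) p.2)]) (by positivity) ((sq_nonneg _).trans (amplitude_le p))

/-- Decay of the `L²` norms of `∂ₓu, ∂ₓv` and of the `L⁴` norm of `u` on the regions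
    `|x| ≤ K t^{p₁}`, `0 < p₁ < 2/3`, in the case `β > 0`. -/
theorem skdv_H1_decay_beta_pos (α β γ : ℝ) (hα : α < 0) (hγ : γ < 0) (hβ : 0 < β)
    (u : ℝ → ℝ → ℂ) (v : ℝ → ℝ → ℝ) (hsol : IsSKdVSolution α β γ u v)
    (p₁ K : ℝ) (hp₁ : 0 < p₁) (hp₁' : p₁ < 2 / 3) (hK : 0 < K) :
    liminf (fun t : ℝ =>
        ∫ x in {x : ℝ | |x| ≤ K * t ^ p₁},
          ((deriv (v t) x) ^ 2 + ‖deriv (u t) x‖ ^ 2)) atTop = 0 ∧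
    liminf (fun t : ℝ =>
        ∫ x in {x : ℝ | |x| ≤ K * t ^ p₁}, ‖u t x‖ ^ 4) atTop = 0 :=
  skdv_H1_decay_beta_pos_general hα hγ hsol (isLittleO_const_mul_rpow_rpow_atTop K hp₁')
end
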